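/- arXiv:1712.01542 — 8 statements merged into one kernel-verified Lean document; each statement's English description precedes it below -/
import Mathlib

section
/- Let T be a finite-dimensional nilpotent Lie algebra over a field F of nilpotency class 3 with dim [T,T] = 2 such that T is stem (i.e. Z(T) ⊆ [T,T]). Then T is capable if and only if 3 ≤ dim (T/Z(T)) ≤ 4. -/
open Module

universe u

/-- A witness to the capability of a Lie algebra `L` over `F`: a Lie algebra `E`
together with an isomorphism `L ≃ E ⧸ Z(E)`. -/
structure CapableWitness (F : Type u) (L : Type u) [Field F] [LieRing L] [LieAlgebra F L] where
  carrier : Type u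
  [lieRing : LieRing carrier]
  [lieAlgebra : LieAlgebra F carrier]
  equiv : L ≃ₗ⁅F⁆ (carrier ⧸ LieAlgebra.center F carrier)

/-- A Lie algebra `L` over a field `F` is capable if there exists a Lie algebra `E` over `F`
with `L ≅ E ⧸ Z(E)`. -/
def IsCapable (F : Type u) (L : Type u) [Field F] [LieRing L] [LieAlgebra F L] : Prop :=
  Nonempty (CapableWitness F L)


/-- Normal form data for a stem Lie algebra of class 3 with 2-dimensional derived algebra. -/
structure StemData (F T : Type u) [Field F] [LieRing T] [LieAlgebra F T] (x y z w : T) : Prop where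
  hxy : ⁅x, y⁆ = z
  hxz : ⁅x, z⁆ = w
  hw : w ≠ 0
  hyz : ⁅y, z⁆ = 0
  hcw : ∀ t : T, ⁅t, w⁆ = 0
  hcen : ∀ t : T, (∀ s : T, ⁅s, t⁆ = 0) → ∃ c : F, t = c • w
  hdec : ∀ t : T, ∃ (a b c : F) (d : T), t = a • x + b • y + c • z + d ∧ ⁅x, d⁆ = 0 ∧ ⁅z, d⁆ = 0
  hcc : ∀ c c' : T, ⁅z, c⁆ = 0 → ⁅z, c'⁆ = 0 → ∃ a : F, ⁅c, c'⁆ = a • w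
  hfin : finrank F (LieAlgebra.center F T) = 1

theorem exists_stemData
    (F T : Type u) [Field F] [LieRing T] [LieAlgebra F T] [FiniteDimensional F T]
    (hclass : LieModule.lowerCentralSeries F T T 2 ≠ ⊥ ∧ LieModule.lowerCentralSeries F T T 3 = ⊥)
    (hder : finrank F ↥(LieModule.lowerCentralSeries F T T 1) = 2)
    (hstem : LieAlgebra.center F T ≤ LieModule.lowerCentralSeries F T T 1) :
    ∃ x y z w : T, StemData F T x y z w := by
  obtain ⟨h2, h3⟩ := hclass
  have e2 : LieModule.lowerCentralSeries F T T 2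
      = ⁅(⊤ : LieIdeal F T), LieModule.lowerCentralSeries F T T 1⁆ :=
    LieModule.lowerCentralSeries_succ F T T 1
  have e3 : LieModule.lowerCentralSeries F T T 3
      = ⁅(⊤ : LieIdeal F T), LieModule.lowerCentralSeries F T T 2⁆ :=
    LieModule.lowerCentralSeries_succ F T T 2
  have e1 : LieModule.lowerCentralSeries F T T 1
      = ⁅(⊤ : LieIdeal F T), (⊤ : LieSubmodule F T T)⁆ :=
    LieModule.lowerCentralSeries_succ F T T 0
  set L1 := LieModule.lowerCentralSeries F T T 1 with hL1
  set L2 := LieModule.lowerCentralSeries F T T 2 with hL2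
  set Z := LieAlgebra.center F T with hZ
  have memZ : ∀ t : T, t ∈ Z ↔ ∀ s : T, ⁅s, t⁆ = 0 := fun t => by
    rw [hZ]; exact LieModule.mem_maxTrivSubmodule F T T t
  have m1 : ∀ s t : T, ⁅s, t⁆ ∈ L1 := fun s t => by
    rw [e1]; exact LieSubmodule.lie_mem_lie (LieSubmodule.mem_top _) (LieSubmodule.mem_top _)
  have m2 : ∀ s t : T, t ∈ L1 → ⁅s, t⁆ ∈ L2 := fun s t ht => by
    rw [e2]; exact LieSubmodule.lie_mem_lie (LieSubmodule.mem_top _) ht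
  have m3 : ∀ t : T, t ∈ L2 → t ∈ Z := fun t ht => by
    rw [memZ]
    intro s
    have : ⁅s, t⁆ ∈ (⊥ : LieSubmodule F T T) := by
      rw [← h3, e3]; exact LieSubmodule.lie_mem_lie (LieSubmodule.mem_top _) ht
    simpa using this
  have m4 : ∀ s t : T, t ∈ L1 → ⁅s, t⁆ ∈ Z := fun s t ht => m3 _ (m2 s t ht)
  have ex1 : ∃ z0 ∈ L1, ∃ x : T, ⁅x, z0⁆ ≠ 0 := by
    by_contra hcon
    push Not at hcon
    apply h2
    rw [e2, LieSubmodule.lie_eq_bot_iff]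
    intro s _ t ht
    exact hcon t ht s
  obtain ⟨z0, hz0, x, hx⟩ := ex1
  have hz0Z : z0 ∉ Z := fun h => hx ((memZ z0).1 h x)
  have hw0 : ⁅x, z0⁆ ∈ Z := m4 x z0 hz0
  have hZfin : finrank F Z = 1 := by
    have hlt : finrank F Z < 2 := by
      rw [← hder]
      apply Submodule.finrank_lt_finrank_of_lt (s := Z.toSubmodule) (t := L1.toSubmodule)
      refine lt_of_le_of_ne hstem ?_
      intro h
      apply hz0Z
      change z0 ∈ Z.toSubmodule
      rw [h]; exact hz0
    have hpos : 0 < finrank F Z := by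
      have : Nontrivial Z := ⟨⟨⟨_, hw0⟩, 0, fun h => hx (congrArg Subtype.val h)⟩⟩
      exact finrank_pos
    omega
  have spanZ : ∀ w : T, w ∈ Z → w ≠ 0 → ∀ t : T, t ∈ Z → ∃ c : F, t = c • w := by
    intro w hw hw' t ht
    obtain ⟨c, hc⟩ := (finrank_eq_one_iff_of_nonzero' (⟨w, hw⟩ : Z)
      (fun h => hw' (congrArg Subtype.val h))).1 hZfin ⟨t, ht⟩
    exact ⟨c, (congrArg Subtype.val hc).symm⟩
  have decL1 : ∀ l ∈ L1, ∃ a : F, ∃ ζ ∈ Z, l = a • z0 + ζ := by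
    intro l hl
    have hle : Z.toSubmodule ⊔ Submodule.span F {z0} ≤ L1.toSubmodule := by
      refine sup_le hstem ?_
      rw [Submodule.span_singleton_le_iff_mem]; exact hz0
    have hlt : Z.toSubmodule < Z.toSubmodule ⊔ Submodule.span F {z0} := by
      refine lt_of_le_of_ne le_sup_left ?_
      intro h
      apply hz0Z
      change z0 ∈ Z.toSubmodule
      rw [h]
      exact Submodule.mem_sup_right (Submodule.mem_span_singleton_self _)
    have h1 := Submodule.finrank_lt_finrank_of_lt hlt
    have hZfin' : finrank F Z.toSubmodule = 1 := hZfin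
    have hder' : finrank F L1.toSubmodule = 2 := hder
    have heq := Submodule.eq_of_le_of_finrank_le hle (by omega)
    have hl' : l ∈ Z.toSubmodule ⊔ Submodule.span F {z0} := by rw [heq]; exact hl
    obtain ⟨ζ, hζ, v, hv, rfl⟩ := Submodule.mem_sup.1 hl'
    obtain ⟨a, rfl⟩ := Submodule.mem_span_singleton.1 hv
    exact ⟨a, ζ, hζ, add_comm _ _⟩
  -- elements centralizing `z0` centralize the derived algebra
  have cenL1 : ∀ c : T, ⁅c, z0⁆ = 0 → ∀ l ∈ L1, ⁅c, l⁆ = 0 := by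
    intro c hc l hl
    obtain ⟨a, ζ, hζ, rfl⟩ := decL1 l hl
    rw [lie_add, lie_smul, hc, (memZ ζ).1 hζ c]; simp
  have decC : ∀ t : T, ∃ (a : F) (c : T), t = a • x + c ∧ ⁅c, z0⁆ = 0 := by
    intro t
    obtain ⟨a, ha⟩ := spanZ _ hw0 hx _ (m4 t z0 hz0)
    refine ⟨a, t - a • x, by abel, ?_⟩
    rw [sub_lie, smul_lie, ha, sub_self]
  have hCC : ∀ c c' : T, ⁅c, z0⁆ = 0 → ⁅c', z0⁆ = 0 → ⁅c, c'⁆ ∈ Z := by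
    intro c c' hc hc'
    rw [memZ]
    intro t
    rw [leibniz_lie, cenL1 c hc _ (m1 _ _), ← lie_skew, cenL1 c' hc' _ (m1 _ _)]
    simp
  have exy : ∃ y : T, ⁅y, z0⁆ = 0 ∧ ⁅x, y⁆ ∉ Z := by
    by_contra hcon
    push Not at hcon
    apply hz0Z
    have : L1 ≤ Z := by
      rw [e1, LieSubmodule.lie_le_iff]
      intro t _ t' _
      obtain ⟨a, c, rfl, hc⟩ := decC t
      obtain ⟨a', c', rfl, hc'⟩ := decC t'
      have : ⁅a • x + c, a' • x + c'⁆ = a • ⁅x, c'⁆ - a' • ⁅x, c⁆ + ⁅c, c'⁆ := by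
        simp only [add_lie, lie_add, smul_lie, lie_smul, lie_self, smul_zero]
        rw [← lie_skew c x, zero_add, smul_neg]; abel
      rw [this]
      exact Z.add_mem (Z.sub_mem (Z.smul_mem _ (hcon _ hc')) (Z.smul_mem _ (hcon _ hc)))
        (hCC _ _ hc hc')
    exact this hz0
  obtain ⟨y, hy, hxyZ⟩ := exy
  obtain ⟨a, ζ, hζ, hz⟩ := decL1 ⁅x, y⁆ (m1 x y)
  have ha : a ≠ 0 := by
    rintro rfl
    apply hxyZ
    rw [hz]; simpa using hζ
  have hbr : ∀ t : T, ⁅t, ⁅x, y⁆⁆ = a • ⁅t, z0⁆ := by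
    intro t
    rw [hz, lie_add, lie_smul, (memZ ζ).1 hζ t, add_zero]
  have hbr' : ∀ t : T, ⁅⁅x, y⁆, t⁆ = 0 ↔ ⁅t, z0⁆ = 0 := by
    intro t
    rw [← lie_skew, hbr]; simp [ha]
  have hwne : ⁅x, ⁅x, y⁆⁆ ≠ 0 := by
    rw [hbr]; exact smul_ne_zero ha hx
  have hwZ : ⁅x, ⁅x, y⁆⁆ ∈ Z := m4 _ _ (m1 _ _)
  refine ⟨x, y, ⁅x, y⁆, ⁅x, ⁅x, y⁆⁆, rfl, rfl, hwne, ?_, (memZ _).1 hwZ, ?_, ?_, ?_, hZfin⟩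
  · rw [hbr, hy, smul_zero]
  · intro t ht
    exact spanZ _ hwZ hwne t ((memZ t).2 ht)
  · intro t
    obtain ⟨α, c, rfl, hc⟩ := decC t
    obtain ⟨m, ζ', hζ', hm⟩ := decL1 ⁅x, c⁆ (m1 x c)
    have : ⁅x, c⁆ - (m * a⁻¹) • ⁅x, y⁆ ∈ Z := by
      have : ⁅x, c⁆ - (m * a⁻¹) • ⁅x, y⁆ = ζ' - (m * a⁻¹) • ζ := by
        rw [hm, hz, smul_add, smul_smul, mul_assoc, inv_mul_cancel₀ ha, mul_one]; abel
      rw [this]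
      exact Z.sub_mem hζ' (Z.smul_mem _ hζ)
    obtain ⟨n, hn⟩ := spanZ _ hwZ hwne _ this
    refine ⟨α, m * a⁻¹, n, c - (m * a⁻¹) • y - n • ⁅x, y⁆, by abel, ?_, ?_⟩
    · rw [lie_sub, lie_sub, lie_smul, lie_smul, hn, sub_self]
    · rw [hbr', sub_lie, sub_lie, smul_lie, smul_lie, hc, hy]
      rw [(hbr' _).1 (lie_self _)]; simp
  · intro c c' hc hc'
    exact spanZ _ hwZ hwne _ (hCC c c' ((hbr' c).1 hc) ((hbr' c').1 hc'))

theorem StemData.not_capable_core {F T : Type u} [Field F] [LieRing T] [LieAlgebra F T]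
    {x y z w : T} (S : StemData F T x y z w) {d₁ d₂ : T}
    (hx1 : ⁅x, d₁⁆ = 0) (hz1 : ⁅z, d₁⁆ = 0) (hx2 : ⁅x, d₂⁆ = 0) (hz2 : ⁅z, d₂⁆ = 0)
    (hne : ⁅d₁, d₂⁆ ≠ 0) {E : Type u} [LieRing E] [LieAlgebra F E] (π : E →ₗ⁅F⁆ T)
    (hsurj : Function.Surjective π) (hker : ∀ e : E, π e = 0 ↔ ∀ f : E, ⁅f, e⁆ = 0) : False := by
  obtain ⟨c, hc⟩ := S.hcc d₁ d₂ hz1 hz2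
  have hc0 : c ≠ 0 := by rintro rfl; exact hne (by rw [hc, zero_smul])
  obtain ⟨X, hX⟩ := hsurj x
  obtain ⟨Y, hY⟩ := hsurj y
  obtain ⟨K₁, hK₁⟩ := hsurj d₁
  obtain ⟨K₂, hK₂⟩ := hsurj d₂
  have cen : ∀ e : E, π e = 0 → ∀ f : E, ⁅f, e⁆ = 0 := fun e h => (hker e).1 h
  have cen' : ∀ e : E, π e = 0 → ∀ f : E, ⁅e, f⁆ = 0 := fun e h f => by
    rw [← lie_skew, cen e h f, neg_zero]
  obtain ⟨Z, hZ⟩ : ∃ Z, Z = ⁅X, Y⁆ := ⟨_, rfl⟩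
  obtain ⟨W, hW⟩ : ∃ W, W = ⁅X, Z⁆ := ⟨_, rfl⟩
  have pZ : π Z = z := by rw [hZ, LieHom.map_lie, hX, hY, S.hxy]
  have pW : π W = w := by rw [hW, LieHom.map_lie, hX, pZ, S.hxz]
  have hXW : ⁅X, W⁆ = 0 := by
    have h1 : ⁅X, c • W - ⁅K₁, K₂⁆⁆ = 0 := by
      apply cen
      rw [map_sub, map_smul, pW, LieHom.map_lie, hK₁, hK₂, hc, sub_self]
    have h2 : ⁅X, ⁅K₁, K₂⁆⁆ = 0 := by
      rw [leibniz_lie, cen' ⁅X, K₁⁆ (by rw [LieHom.map_lie, hX, hK₁, hx1]),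
        cen ⁅X, K₂⁆ (by rw [LieHom.map_lie, hX, hK₂, hx2]), add_zero]
    rw [lie_sub, h2, sub_zero, lie_smul] at h1
    exact (smul_eq_zero.1 h1).resolve_left hc0
  have hYW : ⁅Y, W⁆ = 0 := by
    rw [hW, leibniz_lie, cen ⁅Y, Z⁆ (by rw [LieHom.map_lie, hY, pZ, S.hyz]), ← lie_skew Y X,
      ← hZ, neg_lie, lie_self, neg_zero, add_zero]
  have hZW : ⁅Z, W⁆ = 0 := by
    rw [hZ, lie_lie, hYW, hXW]; simp
  have hDW : ∀ D : E, ⁅x, π D⁆ = 0 → ⁅z, π D⁆ = 0 → ⁅D, W⁆ = 0 := by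
    intro D h1 h2
    rw [hW, leibniz_lie, cen' ⁅D, X⁆ (by rw [LieHom.map_lie, hX, ← lie_skew, h1, neg_zero]),
      cen ⁅D, Z⁆ (by rw [LieHom.map_lie, pZ, ← lie_skew, h2, neg_zero]), add_zero]
  apply S.hw
  rw [← pW, hker]
  intro e
  obtain ⟨a, b, g, d, hd, hd1, hd2⟩ := S.hdec (π e)
  have pD : π (e - (a • X + b • Y + g • Z)) = d := by
    rw [map_sub, map_add, map_add, map_smul, map_smul, map_smul, hX, hY, pZ, hd]; abel
  have hD := hDW (e - (a • X + b • Y + g • Z)) (by rw [pD, hd1]) (by rw [pD, hd2])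
  rw [sub_lie, add_lie, add_lie, smul_lie, smul_lie, smul_lie, hXW, hYW, hZW] at hD
  simpa using hD

theorem StemData.not_capable {F T : Type u} [Field F] [LieRing T] [LieAlgebra F T]
    {x y z w : T} (S : StemData F T x y z w) {d₁ d₂ : T}
    (hx1 : ⁅x, d₁⁆ = 0) (hz1 : ⁅z, d₁⁆ = 0) (hx2 : ⁅x, d₂⁆ = 0) (hz2 : ⁅z, d₂⁆ = 0)
    (hne : ⁅d₁, d₂⁆ ≠ 0) : ¬ IsCapable F T := by
  rintro ⟨⟨E, e⟩⟩
  let π : E →ₗ⁅F⁆ T :=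
    { toFun := fun f => e.symm (LieSubmodule.Quotient.mk f)
      map_add' := fun f g => map_add e.symm (LieSubmodule.Quotient.mk f) (LieSubmodule.Quotient.mk g)
      map_smul' := fun a f => map_smul e.symm a (LieSubmodule.Quotient.mk f)
      map_lie' := fun {f g} => LieEquiv.map_lie e.symm (LieSubmodule.Quotient.mk f)
        (LieSubmodule.Quotient.mk g) }
  refine S.not_capable_core hx1 hz1 hx2 hz2 hne (E := E) π ?_ ?_
  · exact e.symm.surjective.comp (LieSubmodule.Quotient.surjective_mk' _)
  · intro f
    have h1 := LieModule.mem_maxTrivSubmodule F E E f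
    rw [← h1]
    have h2 : LieSubmodule.Quotient.mk (N := LieAlgebra.center F E) f = 0 ↔
      f ∈ LieAlgebra.center F E := LieSubmodule.Quotient.mk_eq_zero _
    refine Iff.trans ?_ h2
    change e.symm (LieSubmodule.Quotient.mk f) = 0 ↔ _
    constructor
    · intro h
      exact e.symm.injective (h.trans (map_zero e.symm).symm)
    · intro h
      rw [h, map_zero]

/-- Central extension of `T` by `F` attached to a bilinear map. -/
def CExt {F T : Type u} [Field F] [LieRing T] [LieAlgebra F T] (_θ : T →ₗ[F] T →ₗ[F] F) : Type u :=
  T × F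

section
variable {F T : Type u} [Field F] [LieRing T] [LieAlgebra F T] (θ : T →ₗ[F] T →ₗ[F] F)

instance : AddCommGroup (CExt θ) := inferInstanceAs (AddCommGroup (T × F))
instance : Module F (CExt θ) := inferInstanceAs (Module F (T × F))

/-- The Lie ring structure on the central extension. -/
@[reducible] def CExt.lieRing (h0 : ∀ t, θ t t = 0)
    (hJ : ∀ a b c, θ a ⁅b, c⁆ = θ ⁅a, b⁆ c + θ b ⁅a, c⁆) : LieRing (CExt θ) where
  bracket p q := (⁅p.1, q.1⁆, θ p.1 q.1)
  add_lie p q r := Prod.ext (add_lie p.1 q.1 r.1) (by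
    change θ (p.1 + q.1) r.1 = θ p.1 r.1 + θ q.1 r.1; simp)
  lie_add p q r := Prod.ext (lie_add p.1 q.1 r.1) (by
    change θ p.1 (q.1 + r.1) = θ p.1 q.1 + θ p.1 r.1; simp)
  lie_self p := Prod.ext (lie_self p.1) (h0 p.1)
  leibniz_lie p q r := Prod.ext (leibniz_lie p.1 q.1 r.1) (hJ p.1 q.1 r.1)

/-- The Lie algebra structure on the central extension. -/
@[reducible] def CExt.lieAlgebra (h0 : ∀ t, θ t t = 0)
    (hJ : ∀ a b c, θ a ⁅b, c⁆ = θ ⁅a, b⁆ c + θ b ⁅a, c⁆) :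
    @LieAlgebra F (CExt θ) _ (CExt.lieRing θ h0 hJ) :=
  letI := CExt.lieRing θ h0 hJ
  { lie_smul := fun a p q => Prod.ext (lie_smul a p.1 q.1) (by
      change θ p.1 (a • q.1) = a • θ p.1 q.1; simp) }

end

theorem capable_of_cocycle {F T : Type u} [Field F] [LieRing T] [LieAlgebra F T]
    (θ : T →ₗ[F] T →ₗ[F] F) (h0 : ∀ t, θ t t = 0)
    (hJ : ∀ a b c, θ a ⁅b, c⁆ = θ ⁅a, b⁆ c + θ b ⁅a, c⁆)
    (hnd : ∀ t : T, (∀ s : T, ⁅s, t⁆ = 0) → (∀ s : T, θ s t = 0) → t = 0) : IsCapable F T := by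
  let _ := CExt.lieRing θ h0 hJ
  let _ := CExt.lieAlgebra θ h0 hJ
  let π : CExt θ →ₗ⁅F⁆ T :=
    { toFun := fun p => p.1
      map_add' := fun _ _ => rfl
      map_smul' := fun _ _ => rfl
      map_lie' := rfl }
  have hs : Function.Surjective π := fun t => ⟨((t, 0) : T × F), rfl⟩
  have hk : π.ker = LieAlgebra.center F (CExt θ) := by
    ext p
    rw [LieHom.mem_ker]
    refine Iff.trans ?_ (LieModule.mem_maxTrivSubmodule F (CExt θ) (CExt θ) p).symm
    change p.1 = 0 ↔ _
    constructor
    · intro hp s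
      refine Prod.ext ?_ ?_
      · change ⁅s.1, p.1⁆ = 0
        rw [hp, lie_zero]
      · change θ s.1 p.1 = 0
        rw [hp, map_zero]
    · intro h
      apply hnd
      · intro s
        exact congrArg Prod.fst (h ((s, 0) : T × F))
      · intro s
        exact congrArg Prod.snd (h ((s, 0) : T × F))
  have e := LieHom.quotKerEquivRange π
  rw [hk] at e
  have hr : π.range = ⊤ := (LieHom.range_eq_top π).2 hs
  rw [hr] at e
  exact ⟨⟨CExt θ, (e.trans LieSubalgebra.topEquiv).symm⟩⟩

/-- Capability from coordinates. -/
theorem StemData.capable {F T : Type u} [Field F] [LieRing T] [LieAlgebra F T]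
    {x y z w : T} (S : StemData F T x y z w) (α β γ κ ω : T →ₗ[F] F)
    (hbr : ∀ s t : T, ⁅s, t⁆ = (α s * β t - α t * β s) • z
      + (α s * γ t - α t * γ s + β s * κ t - β t * κ s) • w)
    (hx : α x = 1 ∧ γ x = 0) (hz : α z = 0 ∧ γ z = 1 ∧ κ z = 0 ∧ ω z = 0)
    (hw : α w = 0 ∧ γ w = 0 ∧ κ w = 0 ∧ ω w = 1) :
    IsCapable F T := by
  obtain ⟨hx1, hx2⟩ := hx
  obtain ⟨hz1, hz2, hz3, hz4⟩ := hz
  obtain ⟨hw1, hw2, hw3, hw4⟩ := hw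
  let θ : T →ₗ[F] T →ₗ[F] F :=
    LinearMap.mk₂ F (fun s t => α s * ω t - α t * ω s + γ s * κ t - γ t * κ s)
      (fun _ _ _ => by simp only [map_add]; ring) (fun _ _ _ => by simp only [map_smul, smul_eq_mul]; ring)
      (fun _ _ _ => by simp only [map_add]; ring) (fun _ _ _ => by simp only [map_smul, smul_eq_mul]; ring)
  have hθ : ∀ s t, θ s t = α s * ω t - α t * ω s + γ s * κ t - γ t * κ s := fun _ _ => rfl
  refine capable_of_cocycle θ ?_ ?_ ?_
  · intro t; rw [hθ]; ring
  · intro a b c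
    simp only [hθ]
    simp only [hbr, map_add, map_smul, smul_eq_mul, hz1, hz2, hz3, hz4, hw1, hw2, hw3, hw4]
    ring
  · intro t ht ht'
    obtain ⟨c, rfl⟩ := S.hcen t ht
    have := ht' x
    simp only [hθ, map_smul, smul_eq_mul, hx1, hx2, hw1, hw2, hw3, hw4] at this
    have hc : c = 0 := by simpa using this
    rw [hc, zero_smul]

theorem StemData.coeff_zero {F T : Type u} [Field F] [LieRing T] [LieAlgebra F T]
    {x y z w : T} (S : StemData F T x y z w) (a b c : F) (d : T)
    (hx : ⁅x, d⁆ = 0) (hz : ⁅z, d⁆ = 0) (h : a • x + b • y + c • z + d = 0) :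
    a = 0 ∧ b = 0 ∧ c = 0 ∧ d = 0 := by
  have hzx : ⁅z, x⁆ = -w := by rw [← lie_skew, S.hxz]
  have hzy : ⁅z, y⁆ = 0 := by rw [← lie_skew, S.hyz, neg_zero]
  have h1 : ⁅z, a • x + b • y + c • z + d⁆ = 0 := by rw [h, lie_zero]
  simp only [lie_add, lie_smul, hzx, hzy, hz, lie_self, smul_zero, add_zero, smul_neg,
    neg_eq_zero, smul_eq_zero, S.hw, or_false] at h1
  subst h1
  have h2 : ⁅x, (0 : F) • x + b • y + c • z + d⁆ = 0 := by rw [h, lie_zero]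
  simp only [lie_add, lie_smul, S.hxy, S.hxz, hx, zero_smul, zero_add, add_zero] at h2
  have h3 : ⁅x, b • z + c • w⁆ = 0 := by rw [h2, lie_zero]
  simp only [lie_add, lie_smul, S.hxz, S.hcw, smul_zero, add_zero, smul_eq_zero, S.hw,
    or_false] at h3
  subst h3
  simp only [zero_smul, zero_add, smul_eq_zero, S.hw, or_false] at h2
  subst h2
  exact ⟨rfl, rfl, rfl, by simpa using h⟩

theorem stem_class_three_capable_iff_central_quotient_dim
    (F T : Type u) [Field F] [LieRing T] [LieAlgebra F T] [FiniteDimensional F T]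
    (hclass : LieModule.lowerCentralSeries F T T 2 ≠ ⊥ ∧ LieModule.lowerCentralSeries F T T 3 = ⊥)
    (hder : finrank F ↥(LieModule.lowerCentralSeries F T T 1) = 2)
    (hstem : LieAlgebra.center F T ≤ LieModule.lowerCentralSeries F T T 1) :
    IsCapable F T ↔
      3 ≤ finrank F (T ⧸ LieAlgebra.center F T) ∧
        finrank F (T ⧸ LieAlgebra.center F T) ≤ 4 := by
  obtain ⟨x, y, z, w, S⟩ := exists_stemData F T hclass hder hstem
  have hdim : finrank F (T ⧸ LieAlgebra.center F T) + 1 = finrank F T := by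
    have := Submodule.finrank_quotient_add_finrank (LieAlgebra.center F T).toSubmodule
    rw [← this]
    congr 1
    exact S.hfin.symm
  have hzx : ⁅z, x⁆ = -w := by rw [← lie_skew, S.hxz]
  have hyx : ⁅y, x⁆ = -z := by rw [← lie_skew, S.hxy]
  have hzy : ⁅z, y⁆ = 0 := by rw [← lie_skew, S.hyz, neg_zero]
  have hwc : ∀ t : T, ⁅w, t⁆ = 0 := fun t => by rw [← lie_skew, S.hcw, neg_zero]
  by_cases hcase : ∃ d₁ d₂ : T, ⁅x, d₁⁆ = 0 ∧ ⁅z, d₁⁆ = 0 ∧ ⁅x, d₂⁆ = 0 ∧ ⁅z, d₂⁆ = 0 ∧ ⁅d₁, d₂⁆ ≠ 0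
  · obtain ⟨d₁, d₂, hx1, hz1, hx2, hz2, hne⟩ := hcase
    refine iff_of_false (S.not_capable hx1 hz1 hx2 hz2 hne) ?_
    have hli : LinearIndependent F ![x, y, z, w, d₁, d₂] := by
      rw [Fintype.linearIndependent_iff]
      intro g hg
      simp only [Fin.sum_univ_six, Matrix.cons_val] at hg
      obtain ⟨h0, h1, h2, h3⟩ := S.coeff_zero (g 0) (g 1) (g 2) (g 3 • w + g 4 • d₁ + g 5 • d₂)
        (by simp [S.hcw, hx1, hx2]) (by simp [S.hcw, hz1, hz2]) (by rw [← hg]; abel)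
      have h4 : ⁅d₁, g 3 • w + g 4 • d₁ + g 5 • d₂⁆ = 0 := by rw [h3, lie_zero]
      have h5 : ⁅g 3 • w + g 4 • d₁ + g 5 • d₂, d₂⁆ = 0 := by rw [h3, zero_lie]
      simp only [lie_add, lie_smul, S.hcw, lie_self, smul_zero, zero_add, smul_eq_zero, hne,
        or_false] at h4
      simp only [add_lie, smul_lie, hwc, lie_self, smul_zero, zero_add, add_zero, smul_eq_zero, hne,
        or_false] at h5
      rw [h4, h5] at h3
      simp only [zero_smul, add_zero, smul_eq_zero, S.hw, or_false] at h3
      intro i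
      fin_cases i <;> assumption
    have := hli.fintype_card_le_finrank
    simp only [Fintype.card_fin] at this
    omega
  · push Not at hcase
    have hyD : ∀ d : T, ⁅x, d⁆ = 0 → ⁅z, d⁆ = 0 → ∃ c : F, ⁅y, d⁆ = c • w :=
      fun d _ h2 => S.hcc y d hzy h2
    have hDZ : ∀ d : T, ⁅x, d⁆ = 0 → ⁅z, d⁆ = 0 → ⁅y, d⁆ = 0 → ∃ c : F, d = c • w := by
      intro d h1 h2 h3
      apply S.hcen
      intro s
      obtain ⟨a, b, c, d', rfl, h4, h5⟩ := S.hdec s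
      simp [h1, h2, h3, hcase d' d h4 h5 h1 h2]
    by_cases hk : ∃ k : T, ⁅x, k⁆ = 0 ∧ ⁅z, k⁆ = 0 ∧ ⁅y, k⁆ ≠ 0
    · obtain ⟨k₀, hxk₀, hzk₀, hyk₀⟩ := hk
      obtain ⟨c₀, hc₀⟩ := hyD k₀ hxk₀ hzk₀
      have hc₀' : c₀ ≠ 0 := by rintro rfl; exact hyk₀ (by rw [hc₀, zero_smul])
      obtain ⟨k, hxk, hzk, hyk⟩ : ∃ k : T, ⁅x, k⁆ = 0 ∧ ⁅z, k⁆ = 0 ∧ ⁅y, k⁆ = w :=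
        ⟨c₀⁻¹ • k₀, by rw [lie_smul, hxk₀, smul_zero], by rw [lie_smul, hzk₀, smul_zero],
          by rw [lie_smul, hc₀, smul_smul, inv_mul_cancel₀ hc₀', one_smul]⟩
      have hkx : ⁅k, x⁆ = 0 := by rw [← lie_skew, hxk, neg_zero]
      have hkz : ⁅k, z⁆ = 0 := by rw [← lie_skew, hzk, neg_zero]
      have hky : ⁅k, y⁆ = -w := by rw [← lie_skew, hyk]
      have hli : LinearIndependent F ![x, y, z, w, k] := by
        rw [Fintype.linearIndependent_iff]
        intro g hg
        simp only [Fin.sum_univ_five, Matrix.cons_val] at hg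
        obtain ⟨h0, h1, h2, h3⟩ := S.coeff_zero (g 0) (g 1) (g 2) (g 3 • w + g 4 • k)
          (by simp [S.hcw, hxk]) (by simp [S.hcw, hzk]) (by rw [← hg]; abel)
        have h4 : ⁅y, g 3 • w + g 4 • k⁆ = 0 := by rw [h3, lie_zero]
        simp only [lie_add, lie_smul, S.hcw, smul_zero, zero_add, smul_eq_zero, hyk, S.hw,
          or_false] at h4
        rw [h4] at h3
        simp only [zero_smul, add_zero, smul_eq_zero, S.hw, or_false] at h3
        intro i
        fin_cases i <;> assumption
      have hsp : ⊤ ≤ Submodule.span F (Set.range ![x, y, z, w, k]) := by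
        intro t _
        obtain ⟨a, b, c, d, rfl, h1, h2⟩ := S.hdec t
        obtain ⟨e, he⟩ := hyD d h1 h2
        obtain ⟨f, hf⟩ := hDZ (d - e • k) (by rw [lie_sub, lie_smul, h1, hxk]; simp)
          (by rw [lie_sub, lie_smul, h2, hzk]; simp) (by rw [lie_sub, lie_smul, he, hyk]; simp)
        rw [Submodule.mem_span_range_iff_exists_fun]
        refine ⟨![a, b, c, f, e], ?_⟩
        simp only [Fin.sum_univ_five, Matrix.cons_val]
        rw [← hf]; abel
      let B := Basis.mk hli hsp
      have hcard := Module.finrank_eq_card_basis B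
      simp only [Fintype.card_fin] at hcard
      refine iff_of_true ?_ (by omega)
      have hB0 : B 0 = x := by simp [B]
      have hB1 : B 1 = y := by simp [B]
      have hB2 : B 2 = z := by simp [B]
      have hB3 : B 3 = w := by simp [B]
      have hB4 : B 4 = k := by simp [B]
      have hexp : ∀ t : T, t = B.coord 0 t • x + B.coord 1 t • y + B.coord 2 t • z + B.coord 3 t • w
          + B.coord 4 t • k := by
        intro t
        conv_lhs => rw [← B.sum_repr t]
        simp only [Fin.sum_univ_five, hB0, hB1, hB2, hB3, hB4, Basis.coord_apply]
      refine S.capable (B.coord 0) (B.coord 1) (B.coord 2) (B.coord 4) (B.coord 3) ?_ ?_ ?_ ?_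
      · intro s t
        conv_lhs => rw [hexp s, hexp t]
        simp only [add_lie, lie_add, smul_lie, lie_smul, lie_self, S.hxy, S.hxz, S.hyz, hzx, hyx,
          hzy, hwc, S.hcw, hxk, hyk, hzk, hkx, hky, hkz]
        module
      · rw [← hB0]; simp
      · rw [← hB2]; simp
      · rw [← hB3]; simp
    · push Not at hk
      have hli : LinearIndependent F ![x, y, z, w] := by
        rw [Fintype.linearIndependent_iff]
        intro g hg
        simp only [Fin.sum_univ_four, Matrix.cons_val] at hg
        obtain ⟨h0, h1, h2, h3⟩ := S.coeff_zero (g 0) (g 1) (g 2) (g 3 • w)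
          (by simp [S.hcw]) (by simp [S.hcw]) hg
        simp only [smul_eq_zero, S.hw, or_false] at h3
        intro i
        fin_cases i <;> assumption
      have hsp : ⊤ ≤ Submodule.span F (Set.range ![x, y, z, w]) := by
        intro t _
        obtain ⟨a, b, c, d, rfl, h1, h2⟩ := S.hdec t
        obtain ⟨f, rfl⟩ := hDZ d h1 h2 (hk d h1 h2)
        rw [Submodule.mem_span_range_iff_exists_fun]
        refine ⟨![a, b, c, f], ?_⟩
        simp only [Fin.sum_univ_four, Matrix.cons_val]
      let B := Basis.mk hli hsp
      have hcard := Module.finrank_eq_card_basis B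
      simp only [Fintype.card_fin] at hcard
      refine iff_of_true ?_ (by omega)
      have hB0 : B 0 = x := by simp [B]
      have hB1 : B 1 = y := by simp [B]
      have hB2 : B 2 = z := by simp [B]
      have hB3 : B 3 = w := by simp [B]
      have hexp : ∀ t : T, t = B.coord 0 t • x + B.coord 1 t • y + B.coord 2 t • z
          + B.coord 3 t • w := by
        intro t
        conv_lhs => rw [← B.sum_repr t]
        simp only [Fin.sum_univ_four, hB0, hB1, hB2, hB3, Basis.coord_apply]
      refine S.capable (B.coord 0) (B.coord 1) (B.coord 2) 0 (B.coord 3) ?_ ?_ ?_ ?_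
      · intro s t
        conv_lhs => rw [hexp s, hexp t]
        simp only [add_lie, lie_add, smul_lie, lie_smul, lie_self, S.hxy, S.hxz, S.hyz, hzx, hyx,
          hzy, hwc, S.hcw, LinearMap.zero_apply]
        module
      · rw [← hB0]; simp
      · rw [← hB2]; simp
      · rw [← hB3]; simp
end

section
/- Let L be a finite-dimensional nilpotent Lie algebra over a field F of nilpotency class 3 with dim [L,L] = 2. Then L is capable if and only if 3 ≤ dim (L/Z(L)) ≤ 4. -/
open Module

universe u

/-- Structure constants of a class three Lie algebra with two-dimensional derived algebra. -/
structure StrData (F L : Type u) [Field F] [LieRing L] [LieAlgebra F L] where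
  x : L
  w : L
  y : L
  z : L
  xi : L →ₗ[F] F
  al : L →ₗ[F] F
  et : L →ₗ[F] F
  ze : L →ₗ[F] F
  ety : et y = 1
  etz : et z = 0
  zey : ze y = 0
  zez : ze z = 1
  xix : xi x = 1
  xiw : xi w = 0
  xiy : xi y = 0
  xiz : xi z = 0
  alx : al x = 0
  alw : al w = 1
  aly : al y = 0
  alz : al z = 0
  lie : ∀ p q : L, ⁅p, q⁆ = (xi p * al q - xi q * al p) • y + ze ⁅p, q⁆ • z
  liey : ∀ p : L, ⁅p, y⁆ = xi p • z
  liez : ∀ p : L, ⁅p, z⁆ = 0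

section
variable {F L : Type u} [Field F] [LieRing L] [LieAlgebra F L]

theorem exists_dual_pair (y z : L) (h : LinearIndependent F ![y, z]) :
    ∃ et ze : L →ₗ[F] F, et y = 1 ∧ et z = 0 ∧ ze y = 0 ∧ ze z = 1 := by
  have key : ∀ c : Fin 2 → F, ∃ f : L →ₗ[F] F, ∀ i, f (![y, z] i) = c i := by
    intro c
    obtain ⟨g, hg⟩ := LinearMap.exists_extend ((Basis.span h).constr F c)
    refine ⟨g, fun i => ?_⟩
    have h1 := Basis.constr_basis (Basis.span h) F c i
    rw [← hg] at h1
    rw [← h1]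
    simp [Basis.span_apply]
  obtain ⟨et, h1⟩ := key ![1, 0]
  obtain ⟨ze, h2⟩ := key ![0, 1]
  exact ⟨et, ze, by simpa using h1 0, by simpa using h1 1, by simpa using h2 0,
    by simpa using h2 1⟩

theorem exists_strData [FiniteDimensional F L]
    (hclass : LieModule.lowerCentralSeries F L L 2 ≠ ⊥ ∧ LieModule.lowerCentralSeries F L L 3 = ⊥)
    (hder : finrank F ↥(LieModule.lowerCentralSeries F L L 1) = 2) :
    Nonempty (StrData F L) := by
  obtain ⟨h2, h3⟩ := hclass
  have hs : ∀ k (p u : L), u ∈ LieModule.lowerCentralSeries F L L k →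
      ⁅p, u⁆ ∈ LieModule.lowerCentralSeries F L L (k+1) := by
    intro k p u hu
    rw [LieModule.lowerCentralSeries_succ]
    exact LieSubmodule.lie_mem_lie (LieSubmodule.mem_top p) hu
  have hbr : ∀ p q : L, ⁅p, q⁆ ∈ LieModule.lowerCentralSeries F L L 1 := fun p q =>
    hs 0 p q (by simp)
  have hcen : ∀ p u : L, u ∈ LieModule.lowerCentralSeries F L L 2 → ⁅p, u⁆ = 0 := by
    intro p u hu
    have := hs 2 p u hu
    rw [h3] at this
    simpa using this
  obtain ⟨x, y, hy, hxy⟩ : ∃ x y : L, y ∈ LieModule.lowerCentralSeries F L L 1 ∧ ⁅x, y⁆ ≠ 0 := by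
    by_contra! hc
    apply h2
    rw [LieModule.lowerCentralSeries_succ, eq_bot_iff, LieSubmodule.lie_le_iff]
    intro a _ b hb
    simp [hc a b hb]
  obtain ⟨z, hz⟩ : ∃ z, z = ⁅x, y⁆ := ⟨_, rfl⟩
  rw [← hz] at hxy
  have hz2 : z ∈ LieModule.lowerCentralSeries F L L 2 := hz ▸ hs 1 x y hy
  have hz1 : z ∈ LieModule.lowerCentralSeries F L L 1 := hz ▸ hbr x y
  have hli : LinearIndependent F ![y, z] := by
    rw [LinearIndependent.pair_iff]
    intro s t hst
    have h1 : ⁅x, s • y + t • z⁆ = 0 := by rw [hst]; simp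
    rw [lie_add, lie_smul, lie_smul, ← hz, hcen x z hz2] at h1
    have hs0 : s = 0 := by simpa [hxy] using h1
    subst hs0
    simpa [hxy] using hst
  obtain ⟨et, ze, ety, etz, zey, zez⟩ := exists_dual_pair (F := F) y z hli
  have hspan : (LieModule.lowerCentralSeries F L L 1).toSubmodule =
      Submodule.span F {y, z} := by
    symm
    apply Submodule.eq_of_le_of_finrank_eq
    · rw [Submodule.span_le]
      rintro v (rfl | rfl)
      · exact hy
      · exact hz1
    · have := finrank_span_eq_card hli
      rw [Matrix.range_cons, Matrix.range_cons, Matrix.range_empty, Set.union_empty,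
        Fintype.card_fin, Set.singleton_union] at this
      rw [this]; exact hder.symm
  have hco : ∀ v ∈ LieModule.lowerCentralSeries F L L 1, v = et v • y + ze v • z := by
    intro v hv
    have hv' : v ∈ Submodule.span F {y, z} := by rw [← hspan]; exact hv
    obtain ⟨s, t, rfl⟩ := Submodule.mem_span_pair.1 hv'
    simp [ety, etz, zey, zez]
  have hA : ∀ p : L, et ⁅p, y⁆ = 0 := by
    intro p
    have h1 : ⁅x, ⁅p, y⁆⁆ = 0 := hcen x _ (hs 1 p y hy)
    rw [hco _ (hbr p y), lie_add, lie_smul, lie_smul, ← hz, hcen x z hz2] at h1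
    simpa [hxy] using h1
  let xi : L →ₗ[F] F := - ze ∘ₗ (LieAlgebra.ad F L y : L →ₗ[F] L)
  let al : L →ₗ[F] F := et ∘ₗ (LieAlgebra.ad F L x : L →ₗ[F] L)
  have hxi : ∀ p : L, xi p = ze ⁅p, y⁆ := by
    intro p
    rw [← lie_skew, map_neg]; rfl
  have hal : ∀ p : L, al p = et ⁅x, p⁆ := fun p => rfl
  have liey : ∀ p : L, ⁅p, y⁆ = xi p • z := by
    intro p
    have := hco _ (hbr p y)
    rw [hA, ← hxi] at this
    simpa using this
  have liez : ∀ p : L, ⁅p, z⁆ = 0 := fun p => hcen p z hz2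
  have xix : xi x = 1 := by rw [hxi, ← hz, zez]
  have hAf : ∀ p q : L, et ⁅p, q⁆ = xi p * al q - xi q * al p := by
    intro p q
    have key : ∀ a b c : L, ⁅a, ⁅b, c⁆⁆ = (et ⁅b, c⁆ * xi a) • z := by
      intro a b c
      conv_lhs => rw [hco _ (hbr b c)]
      rw [lie_add, lie_smul, lie_smul, liez, liey, smul_smul]; simp
    have hj := lie_jacobi x p q
    rw [key, key, key, ← add_smul, ← add_smul, xix, ← lie_skew q x, map_neg, ← hal, ← hal] at hj
    have := (smul_eq_zero.1 hj).resolve_right hxy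
    linear_combination this
  have liezl : ∀ p : L, ⁅z, p⁆ = 0 := fun p => by rw [← lie_skew, liez, neg_zero]
  have lie : ∀ p q : L, ⁅p, q⁆ = (xi p * al q - xi q * al p) • y + ze ⁅p, q⁆ • z := by
    intro p q
    rw [← hAf]
    exact hco _ (hbr p q)
  obtain ⟨w0, hw0⟩ : ∃ w0, al w0 ≠ 0 := by
    by_contra! hc
    have hle : (LieModule.lowerCentralSeries F L L 1).toSubmodule ≤ Submodule.span F {z} := by
      rw [LieModule.lowerCentralSeries_succ, LieSubmodule.lieIdeal_oper_eq_linear_span',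
        Submodule.span_le]
      rintro _ ⟨p, _, q, _, rfl⟩
      rw [lie p q, hc, hc]
      simp [Submodule.mem_span_singleton]
    obtain ⟨t, ht⟩ := Submodule.mem_span_singleton.1 (hle hy)
    have := congrArg et ht
    simp [ety, etz] at this
  have alx : al x = 0 := by rw [hal]; simp
  exact ⟨{
    x := x, w := (al w0)⁻¹ • (w0 - xi w0 • x), y := y, z := z
    xi := xi, al := al, et := et, ze := ze
    ety := ety, etz := etz, zey := zey, zez := zez
    xix := xix
    xiw := by simp [xix]
    xiy := by rw [hxi]; simp
    xiz := by rw [hxi, liezl]; simp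
    alx := alx
    alw := by simp [alx, hw0]
    aly := by rw [hal, ← hz, etz]
    alz := by rw [hal, liez, map_zero]
    lie := lie, liey := liey, liez := liez }⟩

/-- A vector-valued alternating 2-cocycle. -/
structure IsCoc {M : Type u} [AddCommGroup M] [Module F M] (th : L →ₗ[F] L →ₗ[F] M) : Prop where
  alt : ∀ p, th p p = 0
  jac : ∀ p q r, th ⁅p, q⁆ r + th ⁅q, r⁆ p + th ⁅r, p⁆ q = 0

theorem IsCoc.skew {M : Type u} [AddCommGroup M] [Module F M] {th : L →ₗ[F] L →ₗ[F] M}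
    (h : IsCoc th) (p q : L) : th p q = - th q p := by
  have := h.alt (p + q)
  simp [h.alt] at this
  exact eq_neg_of_add_eq_zero_left this

theorem capable_imp (h : IsCapable F L) :
    ∃ (M : Type u) (_ : AddCommGroup M) (_ : Module F M) (th : L →ₗ[F] L →ₗ[F] M),
      IsCoc th ∧ ∀ c, (∀ q, th c q = 0) → c = 0 := by
  obtain ⟨E, e⟩ := h
  let s : L → E := fun p => (e p).out
  have hs : ∀ p, LieSubmodule.Quotient.mk (N := LieAlgebra.center F E) (s p) = e p := fun p =>
    Quotient.out_eq' _
  have hq : ∀ a b : E, LieSubmodule.Quotient.mk (N := LieAlgebra.center F E) a =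
      LieSubmodule.Quotient.mk (N := LieAlgebra.center F E) b →
      (∀ c : E, ⁅a, c⁆ = ⁅b, c⁆) ∧ ∀ c : E, ⁅c, a⁆ = ⁅c, b⁆ := by
    intro a b hab
    have : a - b ∈ LieAlgebra.center F E := (Submodule.Quotient.eq _).1 hab
    have h1 : ∀ c : E, ⁅c, a - b⁆ = 0 := (LieModule.mem_maxTrivSubmodule _ _ _ _).1 this
    have h2 : ∀ c : E, ⁅c, a⁆ = ⁅c, b⁆ := fun c => by
      have := h1 c; rw [lie_sub] at this; exact sub_eq_zero.1 this
    exact ⟨fun c => by rw [← lie_skew, h2, lie_skew], h2⟩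
  have hadd : ∀ p q, LieSubmodule.Quotient.mk (N := LieAlgebra.center F E) (s (p + q)) =
      LieSubmodule.Quotient.mk (N := LieAlgebra.center F E) (s p + s q) := by
    intro p q
    rw [hs, map_add, ← hs p, ← hs q]; rfl
  have hsm : ∀ (t : F) p, LieSubmodule.Quotient.mk (N := LieAlgebra.center F E) (s (t • p)) =
      LieSubmodule.Quotient.mk (N := LieAlgebra.center F E) (t • s p) := by
    intro t p
    rw [hs, map_smul, ← hs p]; rfl
  have hlie : ∀ p q, LieSubmodule.Quotient.mk (N := LieAlgebra.center F E) (s ⁅p, q⁆) =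
      LieSubmodule.Quotient.mk (N := LieAlgebra.center F E) ⁅s p, s q⁆ := by
    intro p q
    rw [hs, LieEquiv.map_lie, ← hs p, ← hs q]; rfl
  refine ⟨E, inferInstance, inferInstance,
    LinearMap.mk₂ F (fun p q => ⁅s p, s q⁆) ?_ ?_ ?_ ?_, ⟨?_, ?_⟩, ?_⟩
  · intro p q r
    rw [(hq _ _ (hadd p q)).1, add_lie]
  · intro t p q
    rw [(hq _ _ (hsm t p)).1, smul_lie]
  · intro p q r
    rw [(hq _ _ (hadd q r)).2, lie_add]
  · intro t p q
    rw [(hq _ _ (hsm t q)).2, lie_smul]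
  · intro p
    simp
  · intro p q r
    simp only [LinearMap.mk₂_apply]
    rw [(hq _ _ (hlie _ _)).1, (hq _ _ (hlie _ _)).1, (hq _ _ (hlie _ _)).1]
    have := lie_jacobi (s p) (s q) (s r)
    rw [← lie_skew (s p) ⁅s q, s r⁆, ← lie_skew (s q) ⁅s r, s p⁆,
      ← lie_skew (s r) ⁅s p, s q⁆] at this
    have h' := congrArg Neg.neg this
    rw [neg_zero] at h'
    rw [← h']; abel
  · intro c hc
    simp only [LinearMap.mk₂_apply] at hc
    have hcent : s c ∈ LieAlgebra.center F E := by
      rw [LieModule.mem_maxTrivSubmodule]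
      intro a
      obtain ⟨p, hp⟩ := e.surjective (LieSubmodule.Quotient.mk a)
      replace hp : e p = _ := hp
      rw [← hs] at hp
      rw [← (hq _ _ hp).1, ← lie_skew, hc, neg_zero]
    have : e c = 0 := by
      rw [← hs]
      exact (Submodule.Quotient.mk_eq_zero _).2 hcent
    exact e.injective (this.trans (map_zero e).symm)

/-- The central extension defined by a cocycle. -/
@[ext] structure CExt_s2 {M : Type u} [AddCommGroup M] [Module F M] (th : L →ₗ[F] L →ₗ[F] M) :
    Type u where
  toProd : L × M

theorem capable_of {M : Type u} [AddCommGroup M] [Module F M] (th : L →ₗ[F] L →ₗ[F] M)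
    (h : IsCoc th) (hn : ∀ c, (∀ q : L, ⁅c, q⁆ = 0) → (∀ q, th c q = 0) → c = 0) :
    IsCapable F L := by
  let eq : CExt_s2 th ≃ L × M := ⟨CExt_s2.toProd, CExt_s2.mk, fun _ => rfl, fun _ => rfl⟩
  let _ : AddCommGroup (CExt_s2 th) := eq.addCommGroup
  let _ : Module F (CExt_s2 th) := eq.module F
  let _ : LieRing (CExt_s2 th) :=
    { bracket := fun a b => ⟨(⁅a.1.1, b.1.1⁆, th a.1.1 b.1.1)⟩
      add_lie := fun a b c => by
        refine CExt_s2.ext (Prod.ext ?_ ?_)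
        · exact add_lie a.1.1 b.1.1 c.1.1
        · exact LinearMap.map_add₂ th a.1.1 b.1.1 c.1.1
      lie_add := fun a b c => by
        refine CExt_s2.ext (Prod.ext ?_ ?_)
        · exact lie_add a.1.1 b.1.1 c.1.1
        · exact map_add (th a.1.1) b.1.1 c.1.1
      lie_self := fun a => by
        refine CExt_s2.ext (Prod.ext ?_ ?_)
        · exact lie_self a.1.1
        · exact h.alt a.1.1
      leibniz_lie := fun a b c => by
        refine CExt_s2.ext (Prod.ext ?_ ?_)
        · exact leibniz_lie a.1.1 b.1.1 c.1.1
        · change th a.1.1 ⁅b.1.1, c.1.1⁆ = th ⁅a.1.1, b.1.1⁆ c.1.1 + th b.1.1 ⁅a.1.1, c.1.1⁆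
          have h1 := h.jac a.1.1 b.1.1 c.1.1
          rw [h.skew ⁅b.1.1, c.1.1⁆, h.skew ⁅c.1.1, a.1.1⁆, ← lie_skew c.1.1, map_neg,
            neg_neg] at h1
          rw [← sub_eq_zero, ← neg_eq_zero, ← h1]; abel }
  let _ : LieAlgebra F (CExt_s2 th) :=
    { lie_smul := fun t a b => by
        refine CExt_s2.ext (Prod.ext ?_ ?_)
        · exact lie_smul t a.1.1 b.1.1
        · exact map_smul (th a.1.1) t b.1.1 }
  let f : CExt_s2 th →ₗ⁅F⁆ L :=
    { toFun := fun a => a.1.1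
      map_add' := fun _ _ => rfl
      map_smul' := fun _ _ => rfl
      map_lie' := rfl }
  have hsurj : Function.Surjective f := fun p => ⟨⟨(p, 0)⟩, rfl⟩
  have hker : f.ker = LieAlgebra.center F (CExt_s2 th) := by
    ext a
    rw [LieHom.mem_ker, LieModule.mem_maxTrivSubmodule]
    constructor
    · intro ha b
      have ha' : a.1.1 = 0 := ha
      refine CExt_s2.ext (Prod.ext ?_ ?_)
      · change ⁅b.1.1, a.1.1⁆ = 0
        rw [ha', lie_zero]
      · change th b.1.1 a.1.1 = 0
        rw [ha', map_zero]
    · intro ha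
      have h1 : ∀ q, ⁅q, a.1.1⁆ = 0 ∧ th q a.1.1 = 0 := by
        intro q
        have := ha ⟨(q, 0)⟩
        have h2 := congrArg CExt_s2.toProd this
        exact Prod.mk.inj h2
      refine hn a.1.1 (fun q => ?_) (fun q => ?_)
      · rw [← lie_skew, (h1 q).1, neg_zero]
      · rw [h.skew, (h1 q).2, neg_zero]
  have e1 := f.quotKerEquivRange
  have hr : f.range = ⊤ := (LieHom.range_eq_top f).2 hsurj
  rw [hker] at e1
  rw [hr] at e1
  exact ⟨⟨CExt_s2 th, (e1.trans LieSubalgebra.topEquiv).symm⟩⟩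

/-- The scalar form `ze ⁅p,q⁆`. -/
abbrev StrData.B (D : StrData F L) (p q : L) : F := D.ze ⁅p, q⁆

theorem StrData.zne (D : StrData F L) : D.z ≠ 0 := by
  intro h
  have := D.zez
  rw [h] at this
  simp at this

theorem StrData.liezl (D : StrData F L) (p : L) : ⁅D.z, p⁆ = 0 := by
  rw [← lie_skew, D.liez, neg_zero]

theorem StrData.lieyl (D : StrData F L) (p : L) : ⁅D.y, p⁆ = (-D.xi p) • D.z := by
  rw [← lie_skew, D.liey, neg_smul]

theorem StrData.abelian_of_capable (D : StrData F L) (h : IsCapable F L) :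
    ∀ a b, D.xi a = 0 → D.al a = 0 → D.xi b = 0 → D.al b = 0 → D.ze ⁅a, b⁆ = 0 := by
  obtain ⟨M, _, _, th, hc, hn⟩ := capable_imp h
  intro a b ha1 ha2 hb1 hb2
  by_contra hab
  have hyz : th D.z D.y = 0 := by
    have := hc.jac D.x D.w D.z
    rw [D.lie D.x D.w, D.liez, D.liezl] at this
    simp [D.xix, D.alw, D.xiw, hc.alt] at this
    rw [hc.skew, this, neg_zero]
  have hz : ∀ p, D.xi p = 0 → th D.z p = 0 := by
    intro p hp
    have := hc.jac D.x D.y p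
    rw [D.liey, D.lieyl, D.lie p D.x] at this
    simpa [D.xix, hp, hyz, hc.alt] using this
  have hx : th D.z D.x = 0 := by
    have := hc.jac a b D.x
    rw [D.lie a b, D.lie b D.x, D.lie D.x a] at this
    simpa [D.xix, D.alx, ha1, ha2, hb1, hb2, hab, hz a ha1, hz b hb1] using this
  apply D.zne
  apply hn
  intro q
  have h1 := hz (q - D.xi q • D.x) (by simp [D.xix])
  simpa [hx] using h1

theorem StrData.formula (D : StrData F L)
    (h : ∀ a b, D.xi a = 0 → D.al a = 0 → D.xi b = 0 → D.al b = 0 → D.ze ⁅a, b⁆ = 0) :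
    ∃ be ga : L →ₗ[F] F, be D.y = 1 ∧ be D.z = 0 ∧ ga D.y = 0 ∧ ga D.z = 0 ∧
      ∀ p q, D.ze ⁅p, q⁆ = D.xi p * be q - D.xi q * be p + D.al p * ga q - D.al q * ga p := by
  refine ⟨D.ze ∘ₗ (LieAlgebra.ad F L D.x),
    D.ze ∘ₗ (LieAlgebra.ad F L D.w) - D.ze ⁅D.w, D.x⁆ • D.xi, ?_, ?_, ?_, ?_, ?_⟩
  · simp [D.liey, D.xix, D.zez]
  · simp [D.liez]
  · simp [D.liey, D.xiw, D.xiy]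
  · simp [D.liez, D.xiz]
  · intro p q
    have h1 := h (p - D.xi p • D.x - D.al p • D.w) (q - D.xi q • D.x - D.al q • D.w)
      (by simp [D.xix, D.xiw]) (by simp [D.alx, D.alw]) (by simp [D.xix, D.xiw])
      (by simp [D.alx, D.alw])
    have e1 : D.ze ⁅p, D.x⁆ = - D.ze ⁅D.x, p⁆ := by rw [← lie_skew, map_neg]
    have e2 : D.ze ⁅p, D.w⁆ = - D.ze ⁅D.w, p⁆ := by rw [← lie_skew, map_neg]
    have e3 : D.ze ⁅D.w, D.x⁆ = - D.ze ⁅D.x, D.w⁆ := by rw [← lie_skew, map_neg]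
    simp only [lie_sub, sub_lie, lie_smul, smul_lie, map_sub, map_smul, smul_eq_mul, lie_self,
      map_zero, e1, e2, e3] at h1
    simp only [LinearMap.comp_apply, LinearMap.sub_apply, LinearMap.smul_apply, smul_eq_mul,
      LieAlgebra.ad_apply, e3]
    linear_combination h1

theorem StrData.central (D : StrData F L) (c : L) (hc : ∀ q : L, ⁅c, q⁆ = 0) :
    D.xi c = 0 ∧ D.al c = 0 := by
  have h1 : D.xi c = 0 := by
    have := hc D.y
    rw [D.liey] at this
    simpa [D.zne] using this
  refine ⟨h1, ?_⟩
  have h2 := congrArg D.et (D.lie c D.x)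
  rw [hc] at h2
  simpa [h1, D.xix, D.ety, D.etz] using h2

/-- The wedge of two linear forms. -/
def wedge (f g : L →ₗ[F] F) : L →ₗ[F] L →ₗ[F] F :=
  LinearMap.mk₂ F (fun p q => f p * g q - f q * g p)
    (by intros; simp; ring) (by intros; simp; ring) (by intros; simp; ring)
    (by intros; simp; ring)

theorem wedge_apply (f g : L →ₗ[F] F) (p q : L) : wedge f g p q = f p * g q - f q * g p := rfl

theorem StrData.capable (D : StrData F L)
    (h : ∀ a b, D.xi a = 0 → D.al a = 0 → D.xi b = 0 → D.al b = 0 → D.ze ⁅a, b⁆ = 0) :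
    IsCapable F L := by
  obtain ⟨be, ga, bey, bez, gay, gaz, hB⟩ := D.formula h
  have hev : ∀ (f : L →ₗ[F] F) p q, f ⁅p, q⁆ = (D.xi p * D.al q - D.xi q * D.al p) * f D.y +
      (D.xi p * be q - D.xi q * be p + D.al p * ga q - D.al q * ga p) * f D.z := by
    intro f p q
    conv_lhs => rw [D.lie p q, hB]
    simp
  let I := {th : L →ₗ[F] L →ₗ[F] F // IsCoc th}
  let TH : L →ₗ[F] L →ₗ[F] (I → F) := LinearMap.mk₂ F (fun p q i => i.1 p q)
    (by intros; ext; simp) (by intros; ext; simp) (by intros; ext; simp) (by intros; ext; simp)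
  have hTH : IsCoc TH :=
    ⟨fun p => funext fun i => i.2.alt p, fun p q r => funext fun i => i.2.jac p q r⟩
  refine capable_of TH hTH ?_
  intro c hc hth
  have hth' : ∀ th : L →ₗ[F] L →ₗ[F] F, IsCoc th → ∀ q, th c q = 0 := fun th ht q =>
    congrFun (hth q) ⟨th, ht⟩
  obtain ⟨hc1, hc2⟩ := D.central c hc
  have hlam : ∀ lam : L →ₗ[F] F, lam D.y = 0 → lam D.z = 0 → lam c = 0 := by
    intro lam hy hz
    have := hth' (wedge lam D.xi) ⟨fun p => by rw [wedge_apply]; ring, fun p q r => by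
      simp only [wedge_apply, hev lam, hev D.xi, hy, hz, D.xiy, D.xiz]; ring⟩ D.x
    simpa [wedge_apply, D.xix, hc1] using this
  have hspec := hth' (wedge D.ze D.xi + wedge ga D.et)
    ⟨fun p => by simp only [LinearMap.add_apply, wedge_apply]; ring, fun p q r => by
      simp only [LinearMap.add_apply, wedge_apply, hev D.ze, hev D.xi, hev ga, hev D.et, D.xiy,
        D.xiz, D.zey, D.zez, D.ety, D.etz, gay, gaz]; ring⟩ D.x
  -- `c` lies in the span of `y` and `z`
  have hcyz : c - D.et c • D.y - D.ze c • D.z = 0 := by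
    rw [← Module.forall_dual_apply_eq_zero_iff F]
    intro f
    have := hlam (f - f D.y • D.et - f D.z • D.ze) (by simp [D.ety, D.zey])
      (by simp [D.etz, D.zez])
    simp only [LinearMap.sub_apply, LinearMap.smul_apply, smul_eq_mul] at this
    simp only [map_sub, map_smul, smul_eq_mul]
    linear_combination this
  have hetc : D.et c = 0 := by
    have := congrArg (fun v => ⁅D.x, v⁆) hcyz
    have hcx : ⁅D.x, c⁆ = 0 := by rw [← lie_skew, hc, neg_zero]
    simpa [lie_sub, hcx, D.liey, D.liez, D.xix, D.zne] using this
  have hgac : ga c = 0 := hlam ga gay gaz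
  have hzec : D.ze c = 0 := by
    simpa [wedge_apply, hc1, D.xix, hetc, hgac] using hspec
  simpa [hetc, hzec] using hcyz

theorem mk_sum_eq_zero {n : ℕ} (v : Fin n → L) (g : Fin n → F)
    (h : ∑ i, g i • (LieAlgebra.center F L).toSubmodule.mkQ (v i) = 0) :
    ∀ q : L, ⁅∑ i, g i • v i, q⁆ = 0 := by
  intro q
  have h1 : (LieAlgebra.center F L).toSubmodule.mkQ (∑ i, g i • v i) = 0 := by
    rw [map_sum]; simpa using h
  have h2 : (∑ i, g i • v i) ∈ LieAlgebra.center F L := by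
    exact (Submodule.Quotient.mk_eq_zero _).1 h1
  rw [← lie_skew, (LieModule.mem_maxTrivSubmodule _ _ _ _).1 h2 q, neg_zero]

theorem StrData.three_le [FiniteDimensional F L] (D : StrData F L) :
    3 ≤ finrank F (L ⧸ LieAlgebra.center F L) := by
  have hli : LinearIndependent F
      (fun i => (LieAlgebra.center F L).toSubmodule.mkQ (![D.x, D.w, D.y] i)) := by
    rw [Fintype.linearIndependent_iff]
    intro g hg
    have hc := mk_sum_eq_zero _ _ hg
    obtain ⟨h1, h2⟩ := D.central _ hc
    simp [Fin.sum_univ_succ, D.xix, D.xiw, D.xiy] at h1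
    simp [Fin.sum_univ_succ, D.alx, D.alw, D.aly] at h2
    have h3 := hc D.x
    simp [Fin.sum_univ_succ, h1, h2, D.lieyl, D.xix, D.zne] at h3
    intro i
    fin_cases i
    · exact h1
    · exact h2
    · exact h3
  have := hli.fintype_card_le_finrank
  simp only [Fintype.card_fin] at this
  exact this

theorem StrData.abelian_of_le [FiniteDimensional F L] (D : StrData F L)
    (h : finrank F (L ⧸ LieAlgebra.center F L) ≤ 4) :
    ∀ a b, D.xi a = 0 → D.al a = 0 → D.xi b = 0 → D.al b = 0 → D.ze ⁅a, b⁆ = 0 := by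
  intro a b ha1 ha2 hb1 hb2
  by_contra hab
  have hli : LinearIndependent F
      (fun i => (LieAlgebra.center F L).toSubmodule.mkQ (![D.x, D.w, a, b, D.y] i)) := by
    rw [Fintype.linearIndependent_iff]
    intro g hg
    have hc := mk_sum_eq_zero _ _ hg
    obtain ⟨h1, h2⟩ := D.central _ hc
    simp [Fin.sum_univ_succ, D.xix, D.xiw, D.xiy, ha1, hb1] at h1
    simp [Fin.sum_univ_succ, D.alx, D.alw, D.aly, ha2, hb2] at h2
    have hba : D.ze ⁅b, a⁆ ≠ 0 := by
      rw [← lie_skew, map_neg]; exact neg_ne_zero.2 hab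
    have h3 := congrArg D.ze (hc b)
    simp [Fin.sum_univ_succ, h1, h2, D.lieyl, hb1, hab] at h3
    have h4 := congrArg D.ze (hc a)
    simp [Fin.sum_univ_succ, h1, h2, D.lieyl, ha1, hba] at h4
    have h5 := hc D.x
    simp [Fin.sum_univ_succ, h1, h2, h3, h4, D.lieyl, D.xix, D.zne] at h5
    intro i
    fin_cases i
    · exact h1
    · exact h2
    · exact h3
    · exact h4
    · exact h5
  have := hli.fintype_card_le_finrank
  simp only [Fintype.card_fin] at this
  exact absurd (this.trans h) (by norm_num)

theorem StrData.le_four [FiniteDimensional F L] (D : StrData F L)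
    (h : ∀ a b, D.xi a = 0 → D.al a = 0 → D.xi b = 0 → D.al b = 0 → D.ze ⁅a, b⁆ = 0) :
    finrank F (L ⧸ LieAlgebra.center F L) ≤ 4 := by
  obtain ⟨be, ga, bey, bez, gay, gaz, hB⟩ := D.formula h
  let f : L →ₗ[F] (Fin 4 → F) := LinearMap.pi ![D.xi, D.al, be, ga]
  have hle : LinearMap.ker f ≤ (LieAlgebra.center F L).toSubmodule := by
    intro c hc
    have hc' : f c = 0 := hc
    have h0 : D.xi c = 0 := congrFun hc' 0
    have h1 : D.al c = 0 := congrFun hc' 1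
    have h2 : be c = 0 := congrFun hc' 2
    have h3 : ga c = 0 := congrFun hc' 3
    refine (LieModule.mem_maxTrivSubmodule _ _ _ _).2 fun q => ?_
    rw [D.lie q c, hB]
    simp [h0, h1, h2, h3]
  have e1 := Submodule.finrank_quotient_add_finrank (LieAlgebra.center F L).toSubmodule
  have e2 := f.finrank_range_add_finrank_ker
  have e3 := Submodule.finrank_mono hle
  have e4 := Submodule.finrank_le (LinearMap.range f)
  simp only [finrank_fintype_fun_eq_card, Fintype.card_fin] at e4
  change finrank F (L ⧸ (LieAlgebra.center F L).toSubmodule) ≤ 4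
  omega

end

/-- A finite-dimensional nilpotent Lie algebra of class 3 with 2-dimensional derived
subalgebra is capable iff `3 ≤ dim L/Z(L) ≤ 4`. -/
theorem class_three_capable_iff_central_quotient_dim
    (F L : Type u) [Field F] [LieRing L] [LieAlgebra F L] [FiniteDimensional F L]
    (hclass : LieModule.lowerCentralSeries F L L 2 ≠ ⊥ ∧ LieModule.lowerCentralSeries F L L 3 = ⊥)
    (hder : finrank F ↥(LieModule.lowerCentralSeries F L L 1) = 2) :
    IsCapable F L ↔
      3 ≤ finrank F (L ⧸ LieAlgebra.center F L) ∧
        finrank F (L ⧸ LieAlgebra.center F L) ≤ 4 := by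
  obtain ⟨D⟩ := exists_strData hclass hder
  exact ⟨fun h => ⟨D.three_le, D.le_four (D.abelian_of_capable h)⟩,
    fun h => D.capable (D.abelian_of_le h.2)⟩
end

section
/- Let T be a finite-dimensional nilpotent Lie algebra over a field F of nilpotency class 3 with dim [T,T] = 2 such that T is stem (i.e. Z(T) ⊆ [T,T]). Then Z(T) = T³ = [T,[T,T]], dim Z(T) = 1, and the quotient Q = T/Z(T) satisfies: dim [Q,Q] = 1, [Q,Q] ⊆ Z(Q), and dim (Q/Z(Q)) = 2. -/
open Module

universe u

/-- For a finite-dimensional stem nilpotent Lie algebra `T` of class 3 with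
`dim [T,T] = 2`: `Z(T) = T³`, `dim Z(T) = 1`, and `Q = T/Z(T)` satisfies `dim [Q,Q] = 1`,
`[Q,Q] ⊆ Z(Q)` and `dim Q/Z(Q) = 2`. -/
theorem stem_class_three_center_eq_third_term
    (F T : Type u) [Field F] [LieRing T] [LieAlgebra F T] [FiniteDimensional F T]
    (hclass : LieModule.lowerCentralSeries F T T 2 ≠ ⊥ ∧ LieModule.lowerCentralSeries F T T 3 = ⊥)
    (hder : finrank F ↥(LieModule.lowerCentralSeries F T T 1) = 2)
    (hstem : LieAlgebra.center F T ≤ LieModule.lowerCentralSeries F T T 1) :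
    LieAlgebra.center F T = LieModule.lowerCentralSeries F T T 2 ∧
    finrank F ↥(LieAlgebra.center F T) = 1 ∧
    finrank F ↥(LieModule.lowerCentralSeries F (T ⧸ LieAlgebra.center F T) (T ⧸ LieAlgebra.center F T) 1) = 1 ∧
    LieModule.lowerCentralSeries F (T ⧸ LieAlgebra.center F T) (T ⧸ LieAlgebra.center F T) 1 ≤
      LieAlgebra.center F (T ⧸ LieAlgebra.center F T) ∧
    finrank F ((T ⧸ LieAlgebra.center F T) ⧸
      LieAlgebra.center F (T ⧸ LieAlgebra.center F T)) = 2 := by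
  classical
  obtain ⟨h2, h3⟩ := hclass
  have hDmem : ∀ a b : T, ⁅a, b⁆ ∈ LieModule.lowerCentralSeries F T T 1 := by
    intro a b
    rw [LieModule.lowerCentralSeries_succ]
    exact LieSubmodule.lie_mem_lie (LieSubmodule.mem_top _) (by simp)
  have hCmem : ∀ a : T, ∀ d ∈ LieModule.lowerCentralSeries F T T 1,
      ⁅a, d⁆ ∈ LieModule.lowerCentralSeries F T T 2 := by
    intro a d hd
    rw [LieModule.lowerCentralSeries_succ]
    exact LieSubmodule.lie_mem_lie (LieSubmodule.mem_top _) hd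
  have hCZ : LieModule.lowerCentralSeries F T T 2 ≤ LieAlgebra.center F T := by
    intro c hc
    rw [LieModule.mem_maxTrivSubmodule]
    intro a
    have : ⁅a, c⁆ ∈ LieModule.lowerCentralSeries F T T 3 := by
      rw [LieModule.lowerCentralSeries_succ]
      exact LieSubmodule.lie_mem_lie (LieSubmodule.mem_top _) hc
    rw [h3] at this
    simpa using this
  -- there are `a0, b0` with noncentral bracket
  have hex : ∃ a0 b0 : T, ⁅a0, b0⁆ ∉ LieAlgebra.center F T := by
    by_contra! hcon
    apply h2
    have hDZ : LieModule.lowerCentralSeries F T T 1 ≤ LieAlgebra.center F T := by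
      rw [LieModule.lowerCentralSeries_succ, LieSubmodule.lie_le_iff]
      intro x _ m _
      exact hcon x m
    rw [eq_bot_iff, LieModule.lowerCentralSeries_succ, LieSubmodule.lie_le_iff]
    intro x _ m hm
    have := (LieModule.mem_maxTrivSubmodule F T T m).1 (hDZ hm) x
    simp [this]
  obtain ⟨a0, b0, hyZ⟩ := hex
  obtain ⟨y, hy⟩ : ∃ y, y = ⁅a0, b0⁆ := ⟨_, rfl⟩
  rw [← hy] at hyZ
  have hyD : y ∈ LieModule.lowerCentralSeries F T T 1 := hy ▸ hDmem a0 b0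
  obtain ⟨x, hx⟩ : ∃ x : T, ⁅x, y⁆ ≠ 0 := by
    by_contra! hcon
    exact hyZ ((LieModule.mem_maxTrivSubmodule F T T y).2 hcon)
  have hzC := hCmem x y hyD
  obtain ⟨g, hgy, hgZ⟩ := Submodule.exists_le_ker_of_notMem
    (p := (LieAlgebra.center F T).toSubmodule) (v := y) hyZ
  obtain ⟨f, hfz, -⟩ := Submodule.exists_le_ker_of_notMem
    (p := (⊥ : Submodule F T)) (v := ⁅x, y⁆) (by simpa using hx)
  have hgZ' : ∀ c ∈ LieAlgebra.center F T, g c = 0 := fun c hc => hgZ hc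
  -- dimension of the center
  have hW : (LieAlgebra.center F T).toSubmodule =
      (LieModule.lowerCentralSeries F T T 1).toSubmodule ⊓ LinearMap.ker g ∧
      finrank F ↥(LieAlgebra.center F T).toSubmodule = 1 := by
    have hle : (LieAlgebra.center F T).toSubmodule ≤
      (LieModule.lowerCentralSeries F T T 1).toSubmodule ⊓ LinearMap.ker g := le_inf hstem hgZ
    have hlt : (LieModule.lowerCentralSeries F T T 1).toSubmodule ⊓ LinearMap.ker g <
      (LieModule.lowerCentralSeries F T T 1).toSubmodule := by
      refine lt_of_le_of_ne inf_le_left fun h => hgy ?_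
      have : y ∈ (LieModule.lowerCentralSeries F T T 1).toSubmodule ⊓ LinearMap.ker g := by
        rw [h]; exact hyD
      exact this.2
    have h1 := Submodule.finrank_lt_finrank_of_lt hlt
    have hder' : finrank F ↥(LieModule.lowerCentralSeries F T T 1).toSubmodule = 2 := hder
    have hpos : 0 < finrank F ↥(LieAlgebra.center F T).toSubmodule := by
      rw [Module.finrank_pos_iff_exists_ne_zero]
      exact ⟨⟨_, hCZ hzC⟩, fun h => hx (congrArg Subtype.val h)⟩
    have h2 := Submodule.finrank_mono hle
    exact ⟨Submodule.eq_of_le_of_finrank_le hle (by omega), by omega⟩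
  obtain ⟨hWeq, hZ1⟩ := hW
  have hDg : ∀ d ∈ LieModule.lowerCentralSeries F T T 1, g d = 0 →
      d ∈ LieAlgebra.center F T := by
    intro d hd hgd
    change d ∈ (LieAlgebra.center F T).toSubmodule
    rw [hWeq]; exact ⟨hd, hgd⟩
  have hZz : ∀ c ∈ LieAlgebra.center F T, ∃ r : F, r • ⁅x, y⁆ = c := by
    intro c hc
    have := (finrank_eq_one_iff_of_nonzero' (K := F)
      (V := ↥(LieAlgebra.center F T).toSubmodule) ⟨_, hCZ hzC⟩
      (fun h => hx (congrArg Subtype.val h))).1 hZ1 ⟨c, hc⟩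
    obtain ⟨r, hr⟩ := this
    exact ⟨r, congrArg Subtype.val hr⟩
  have hDdec : ∀ d ∈ LieModule.lowerCentralSeries F T T 1,
      d - (g d / g y) • y ∈ LieAlgebra.center F T := by
    intro d hd
    refine hDg _ (sub_mem hd (SMulMemClass.smul_mem _ hyD)) ?_
    simp [hgy]
  have hlieD : ∀ t : T, ∀ d ∈ LieModule.lowerCentralSeries F T T 1,
      ⁅t, d⁆ = (g d / g y) • ⁅t, y⁆ := by
    intro t d hd
    have := (LieModule.mem_maxTrivSubmodule F T T _).1 (hDdec d hd) t
    rwa [lie_sub, lie_smul, sub_eq_zero] at this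
  -- the Jacobi identity in coordinates
  have hjac : ∀ a b c : T, g ⁅b, c⁆ * f ⁅a, y⁆ + g ⁅c, a⁆ * f ⁅b, y⁆ + g ⁅a, b⁆ * f ⁅c, y⁆ = 0 := by
    intro a b c
    have h := congrArg f (lie_jacobi a b c)
    rw [hlieD a _ (hDmem b c), hlieD b _ (hDmem c a), hlieD c _ (hDmem a b)] at h
    simp only [map_add, map_smul, smul_eq_mul, map_zero] at h
    field_simp at h
    linear_combination h
  have hskew : ∀ a b : T, g ⁅a, b⁆ = - g ⁅b, a⁆ := by
    intro a b; rw [← lie_skew, map_neg]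
  let φ : T →ₗ[F] F × F :=
    LinearMap.prod (f ∘ₗ ((LieModule.toEnd F T T : T →ₗ[F] Module.End F T).flip y))
      (g ∘ₗ (LieModule.toEnd F T T x))
  have hφ : ∀ t, φ t = (f ⁅t, y⁆, g ⁅x, t⁆) := fun t => rfl
  obtain ⟨b, hb⟩ : ∃ b, g ⁅x, b⁆ ≠ 0 := by
    by_contra! hcon
    have h := hjac a0 b0 x
    rw [hskew b0 x, hcon, hcon, ← hy] at h
    simp at h
    tauto
  have hker : ∀ t, t ∈ LinearMap.ker φ ↔ ∀ s : T, ⁅s, t⁆ ∈ LieAlgebra.center F T := by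
    intro t
    rw [LinearMap.mem_ker, hφ, Prod.mk_eq_zero]
    constructor
    · rintro ⟨ht1, ht2⟩ s
      refine hDg _ (hDmem _ _) ?_
      have h := hjac s t x
      rw [hskew t x, ht1, ht2] at h
      simp at h
      tauto
    · intro h
      have hg : ∀ s : T, g ⁅s, t⁆ = 0 := fun s => hgZ' _ (h s)
      refine ⟨?_, hg x⟩
      have h := hjac t x b
      rw [hg b, hskew t x, hg x] at h
      simp at h
      tauto
  have hsurj : Function.Surjective φ := by
    rintro ⟨p, q⟩
    refine ⟨((p - q / g ⁅x, b⁆ * f ⁅b, y⁆) / f ⁅x, y⁆) • x + (q / g ⁅x, b⁆) • b, ?_⟩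
    rw [hφ]
    simp only [add_lie, smul_lie, lie_add, lie_smul, lie_self, map_add, map_smul, smul_eq_mul,
      smul_zero, zero_add]
    ext <;> field_simp <;> ring
  have hQZ : ∀ t : T, (LieSubmodule.Quotient.mk t : T ⧸ LieAlgebra.center F T) ∈
      LieAlgebra.center F (T ⧸ LieAlgebra.center F T) ↔
      ∀ s : T, ⁅s, t⁆ ∈ LieAlgebra.center F T := by
    intro t
    rw [LieModule.mem_maxTrivSubmodule]
    constructor
    · intro h s
      have := h (LieSubmodule.Quotient.mk s)
      rw [← LieSubmodule.Quotient.mk_bracket] at this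
      exact LieSubmodule.Quotient.mk_eq_zero'.1 this
    · intro h s
      obtain ⟨s, rfl⟩ := LieSubmodule.Quotient.surjective_mk' _ s
      have : (LieSubmodule.Quotient.mk ⁅s, t⁆ : T ⧸ LieAlgebra.center F T) = 0 :=
        LieSubmodule.Quotient.mk_eq_zero'.2 (h s)
      rwa [LieSubmodule.Quotient.mk_bracket] at this
  refine ⟨le_antisymm ?_ hCZ, hZ1, ?_, ?_, ?_⟩
  · intro c hc
    obtain ⟨r, rfl⟩ := hZz c hc
    exact SMulMemClass.smul_mem _ hzC
  · have hyQ : (LieSubmodule.Quotient.mk y : T ⧸ LieAlgebra.center F T) ∈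
        LieModule.lowerCentralSeries F (T ⧸ LieAlgebra.center F T)
          (T ⧸ LieAlgebra.center F T) 1 := by
      rw [hy, LieSubmodule.Quotient.mk_bracket, LieModule.lowerCentralSeries_succ]
      exact LieSubmodule.lie_mem_lie (LieSubmodule.mem_top _) (by simp)
    refine finrank_eq_one_iff'.2 ⟨⟨_, hyQ⟩, fun h => hyZ ?_, ?_⟩
    · exact LieSubmodule.Quotient.mk_eq_zero'.1 (congrArg Subtype.val h)
    · rintro ⟨w, hw⟩
      suffices h : w ∈ Submodule.span F
          {(LieSubmodule.Quotient.mk y : T ⧸ LieAlgebra.center F T)} by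
        obtain ⟨r, hr⟩ := Submodule.mem_span_singleton.1 h
        exact ⟨r, Subtype.ext hr⟩
      rw [LieModule.lowerCentralSeries_succ, ← LieSubmodule.mem_toSubmodule,
        LieSubmodule.lieIdeal_oper_eq_linear_span'] at hw
      refine Submodule.span_le.2 ?_ hw
      rintro _ ⟨p, -, q, -, rfl⟩
      obtain ⟨p, rfl⟩ := LieSubmodule.Quotient.surjective_mk' _ p
      obtain ⟨q, rfl⟩ := LieSubmodule.Quotient.surjective_mk' _ q
      refine Submodule.mem_span_singleton.2 ⟨g ⁅p, q⁆ / g y, ?_⟩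
      have := (LieSubmodule.Quotient.mk_eq_zero'
        (N := LieAlgebra.center F T)).2 (hDdec _ (hDmem p q))
      exact (sub_eq_zero.1 this).symm
  · rw [LieModule.lowerCentralSeries_succ, LieSubmodule.lie_le_iff]
    intro p _ q _
    obtain ⟨p, rfl⟩ := LieSubmodule.Quotient.surjective_mk' _ p
    obtain ⟨q, rfl⟩ := LieSubmodule.Quotient.surjective_mk' _ q
    exact (hQZ ⁅p, q⁆).2 fun s => hCZ (hCmem s _ (hDmem p q))
  · let π : T →ₗ[F] ((T ⧸ LieAlgebra.center F T) ⧸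
      LieAlgebra.center F (T ⧸ LieAlgebra.center F T)) :=
      (LieSubmodule.Quotient.mk' (LieAlgebra.center F (T ⧸ LieAlgebra.center F T)) :
        (T ⧸ LieAlgebra.center F T) →ₗ[F] _) ∘ₗ
      (LieSubmodule.Quotient.mk' (LieAlgebra.center F T) : T →ₗ[F] _)
    have hπ : Function.Surjective π :=
      (LieSubmodule.Quotient.surjective_mk' _).comp (LieSubmodule.Quotient.surjective_mk' _)
    have hk : LinearMap.ker π = LinearMap.ker φ := by
      ext t
      rw [hker, ← hQZ, LinearMap.mem_ker]
      exact LieSubmodule.Quotient.mk_eq_zero'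
    have e1 := LinearMap.finrank_range_add_finrank_ker π
    have e2 := LinearMap.finrank_range_add_finrank_ker φ
    rw [LinearMap.range_eq_top.2 hπ, finrank_top, hk] at e1
    rw [LinearMap.range_eq_top.2 hsurj, finrank_top, Module.finrank_prod, finrank_self] at e2
    omega
end

section
/- Let L be a 5-dimensional nilpotent Lie algebra over a field F of nilpotency class 3 with dim [L,L] = 2 such that L is stem (i.e. Z(L) ⊆ [L,L]). Then L is isomorphic to the Lie algebra L_{5,5} over F with basis x₁,…,x₅ and nonzero brackets [x₁,x₂] = x₃, [x₁,x₃] = x₅, [x₂,x₄] = x₅. -/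
open Module

universe u

/-- `L` is isomorphic to `L_{5,5}`: basis `x₁,…,x₅` with `[x₁,x₂]=x₃`, `[x₁,x₃]=x₅`, `[x₂,x₄]=x₅`. -/
def IsL55 (F : Type u) (L : Type u) [Field F] [LieRing L] [LieAlgebra F L] : Prop :=
  ∃ b : Basis (Fin 5) F L,
    ⁅b 0, b 1⁆ = b 2 ∧
    ⁅b 0, b 2⁆ = b 4 ∧
    ⁅b 1, b 3⁆ = b 4 ∧
    ∀ i j : Fin 5, i < j → (i, j) ≠ (0, 1) → (i, j) ≠ (0, 2) → (i, j) ≠ (1, 3) → ⁅b i, b j⁆ = 0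

/-- A 5-dimensional stem nilpotent Lie algebra of class 3 with 2-dimensional derived
subalgebra is isomorphic to `L_{5,5}`. -/
theorem stem_class_three_dim_five_iso_L55
    (F L : Type u) [Field F] [LieRing L] [LieAlgebra F L] [FiniteDimensional F L]
    (hdim : finrank F L = 5)
    (hclass : LieModule.lowerCentralSeries F L L 2 ≠ ⊥ ∧ LieModule.lowerCentralSeries F L L 3 = ⊥)
    (hder : finrank F ↥(LieModule.lowerCentralSeries F L L 1) = 2)
    (hstem : LieAlgebra.center F L ≤ LieModule.lowerCentralSeries F L L 1) :
    IsL55 F L := by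
  obtain ⟨h2, h3⟩ := hclass
  have hanti : LieModule.lowerCentralSeries F L L 2 ≤ LieModule.lowerCentralSeries F L L 1 :=
    LieModule.antitone_lowerCentralSeries F L L (by norm_num)
  have hmem1 : ∀ x y : L, ⁅x, y⁆ ∈ LieModule.lowerCentralSeries F L L 1 := fun x y => by
    rw [LieModule.lowerCentralSeries_succ]
    exact LieSubmodule.lie_mem_lie (LieSubmodule.mem_top x) (by simp)
  have hmem2 : ∀ x y : L, y ∈ LieModule.lowerCentralSeries F L L 1 →
      ⁅x, y⁆ ∈ LieModule.lowerCentralSeries F L L 2 := fun x y hy => by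
    rw [LieModule.lowerCentralSeries_succ]
    exact LieSubmodule.lie_mem_lie (LieSubmodule.mem_top x) hy
  have hmem3 : ∀ x y : L, y ∈ LieModule.lowerCentralSeries F L L 2 → ⁅x, y⁆ = 0 := fun x y hy => by
    have : ⁅x, y⁆ ∈ LieModule.lowerCentralSeries F L L 3 := by
      rw [LieModule.lowerCentralSeries_succ]
      exact LieSubmodule.lie_mem_lie (LieSubmodule.mem_top x) hy
    rw [h3] at this
    simpa using this
  have hle1 : ∀ N : LieSubmodule F L L, (∀ x y : L, ⁅x, y⁆ ∈ N) →
      LieModule.lowerCentralSeries F L L 1 ≤ N := fun N hN => by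
    rw [LieModule.lowerCentralSeries_succ, LieSubmodule.lie_le_iff]
    exact fun x _ y _ => hN x y
  have hle2 : ∀ N : LieSubmodule F L L,
      (∀ x y : L, y ∈ LieModule.lowerCentralSeries F L L 1 → ⁅x, y⁆ ∈ N) →
      LieModule.lowerCentralSeries F L L 2 ≤ N := fun N hN => by
    rw [LieModule.lowerCentralSeries_succ, LieSubmodule.lie_le_iff]
    exact fun x _ y hy => hN x y hy
  have hne : ¬ LieModule.lowerCentralSeries F L L 1 ≤ LieModule.lowerCentralSeries F L L 2 := by
    intro h
    apply h2
    rw [eq_bot_iff]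
    exact hle2 _ fun x y hy => by simpa using hmem3 x y (h hy)
  generalize hD : LieModule.lowerCentralSeries F L L 1 = D at *
  generalize hZ : LieModule.lowerCentralSeries F L L 2 = Z at *
  obtain ⟨z, hzZ, hz0⟩ : ∃ z ∈ Z, z ≠ 0 := by
    by_contra! h
    exact h2 ((LieSubmodule.eq_bot_iff _).2 h)
  obtain ⟨c, hcD, hcZ⟩ := SetLike.not_le_iff_exists.1 hne
  -- a basis of D
  have hli : LinearIndependent F ![(⟨c, hcD⟩ : D), ⟨z, hanti hzZ⟩] := by
    rw [LinearIndependent.pair_iff]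
    intro s t h
    have h' : s • c + t • z = 0 := by simpa using congrArg Subtype.val h
    have hs : s = 0 := by
      by_contra hs
      apply hcZ
      have : c = (-(s⁻¹ * t)) • z := by
        have : s⁻¹ • (s • c + t • z) = 0 := by rw [h', smul_zero]
        rw [smul_add, smul_smul, inv_mul_cancel₀ hs, one_smul, smul_smul] at this
        rw [neg_smul]
        exact eq_neg_of_add_eq_zero_left this
      rw [this]
      exact Z.smul_mem _ hzZ
    subst hs
    simpa [hz0] using h'
  have hcard : Fintype.card (Fin 2) = finrank F D := by simp [hder]
  let bD := basisOfLinearIndependentOfCardEqFinrank hli hcard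
  have hb0 : bD 0 = ⟨c, hcD⟩ := by simp [bD]
  have hb1 : bD 1 = ⟨z, hanti hzZ⟩ := by simp [bD]
  obtain ⟨f, hf⟩ := LinearMap.exists_extend (p := D.toSubmodule) (bD.coord 0)
  obtain ⟨g, hg⟩ := LinearMap.exists_extend (p := D.toSubmodule) (bD.coord 1)
  have hfD : ∀ d : D, f d = bD.coord 0 d := fun d => LinearMap.congr_fun hf d
  have hgD : ∀ d : D, g d = bD.coord 1 d := fun d => LinearMap.congr_fun hg d
  have hrep : ∀ d ∈ D, d = f d • c + g d • z := fun d hd => by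
    have h1 := bD.sum_repr ⟨d, hd⟩
    rw [Fin.sum_univ_two, hb0, hb1] at h1
    have h2 := congrArg Subtype.val h1
    have e1 := hfD ⟨d, hd⟩
    have e2 := hgD ⟨d, hd⟩
    simp only [Basis.coord_apply] at e1 e2
    simp only [← e1, ← e2] at h2
    simpa using h2.symm
  have hfc : f c = 1 := by
    have := hfD (bD 0)
    rw [Basis.coord_apply, Basis.repr_self, Finsupp.single_eq_same] at this
    rwa [hb0] at this
  have hfz : f z = 0 := by
    have := hfD (bD 1)
    rw [Basis.coord_apply, Basis.repr_self, Finsupp.single_eq_of_ne (by decide)] at this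
    rwa [hb1] at this
  clear_value bD
  have hfZ : ∀ d ∈ Z, f d = 0 := fun d hd => by
    by_contra hs
    apply hcZ
    have e := hrep d (hanti hd)
    have : c = (f d)⁻¹ • (d - g d • z) := by
      rw [eq_inv_smul_iff₀ hs, eq_sub_iff_add_eq]; exact e.symm
    rw [this]
    exact Z.smul_mem _ (Z.sub_mem hd (Z.smul_mem _ hzZ))
  have hxz : ∀ x : L, ⁅x, z⁆ = 0 := fun x => hmem3 x z hzZ
  -- φ and its properties
  have hxc : ∀ x : L, ⁅x, c⁆ = g ⁅x, c⁆ • z := fun x => by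
    have := hrep _ (hmem1 x c)
    rwa [hfZ _ (hmem2 x c hcD), zero_smul, zero_add] at this
  have hxd : ∀ x : L, ∀ d ∈ D, ⁅x, d⁆ = (f d * g ⁅x, c⁆) • z := fun x d hd => by
    conv_lhs => rw [hrep d hd]
    rw [lie_add, lie_smul, lie_smul, hxz, smul_zero, add_zero, mul_smul, ← hxc x]
  have hfcomm0 : ∀ d ∈ D, f d = 0 → ∀ x : L, ⁅x, d⁆ = 0 := fun d hd h x => by
    rw [hxd x d hd, h, zero_mul, zero_smul]
  obtain ⟨x1, hx1⟩ : ∃ x : L, g ⁅x, c⁆ ≠ 0 := by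
    by_contra! h
    apply h2
    rw [eq_bot_iff]
    exact hle2 _ fun x y hy => by simp [hxd x y hy, h x]
  obtain ⟨u, v, huv⟩ : ∃ u v : L, f ⁅u, v⁆ ≠ 0 := by
    by_contra! h
    apply hne
    refine hle1 _ fun x y => ?_
    rw [hrep _ (hmem1 x y), h, zero_smul, zero_add]
    exact Z.smul_mem _ hzZ
  -- Jacobi: radical of ω is in the kernel of φ
  have hjac : ∀ r a b : L, f ⁅r, a⁆ = 0 → f ⁅r, b⁆ = 0 → f ⁅a, b⁆ ≠ 0 → g ⁅r, c⁆ = 0 := by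
    intro r a b h1 h2 h3
    have e : ⁅r, ⁅a, b⁆⁆ = 0 := by
      rw [leibniz_lie, hfcomm0 _ (hmem1 r b) h2, ← lie_skew, hfcomm0 _ (hmem1 r a) h1]
      simp
    rw [hxd r _ (hmem1 a b)] at e
    simpa [hz0, h3] using e
  obtain ⟨y, hy⟩ : ∃ y : L, f ⁅x1, y⁆ ≠ 0 := by
    by_contra! h
    exact hx1 (hjac x1 u v (h u) (h v) huv)
  obtain ⟨x2, hx12, hx2⟩ : ∃ x2 : L, f ⁅x1, x2⁆ ≠ 0 ∧ g ⁅x2, c⁆ = 0 := by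
    refine ⟨y - (g ⁅y, c⁆ / g ⁅x1, c⁆) • x1, by simpa using hy, ?_⟩
    simp [hx1]
  obtain ⟨x3, hx3⟩ : ∃ x3, x3 = ⁅x1, x2⁆ := ⟨_, rfl⟩
  have hx3D : x3 ∈ D := hx3 ▸ hmem1 x1 x2
  have hfx3 : f x3 ≠ 0 := hx3 ▸ hx12
  obtain ⟨x5, hx5⟩ : ∃ x5, x5 = ⁅x1, x3⁆ := ⟨_, rfl⟩
  have hx5z : x5 = (f x3 * g ⁅x1, c⁆) • z := by rw [hx5, hxd x1 x3 hx3D]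
  have hk : f x3 * g ⁅x1, c⁆ ≠ 0 := mul_ne_zero hfx3 hx1
  have hx50 : x5 ≠ 0 := by rw [hx5z]; exact smul_ne_zero hk hz0
  have hzx5 : ∀ d ∈ D, f d = 0 → ∃ s : F, d = s • x5 := fun d hd h => by
    refine ⟨g d * (f x3 * g ⁅x1, c⁆)⁻¹, ?_⟩
    conv_lhs => rw [hrep d hd, h]
    rw [hx5z, smul_smul, mul_assoc, inv_mul_cancel₀ hk]
    simp
  have hfx5 : f x5 = 0 := by rw [hx5z]; simp [hfz]
  have hx5D : x5 ∈ D := hx5 ▸ hmem1 x1 x3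
  have hc5 : ∀ x : L, ⁅x, x5⁆ = 0 := hfcomm0 x5 hx5D hfx5
  have hfD0 : ∀ x : L, ∀ d ∈ D, f ⁅x, d⁆ = 0 := fun x d hd => hfZ _ (hmem2 x d hd)
  have h23 : ⁅x2, x3⁆ = 0 := by rw [hxd x2 x3 hx3D, hx2]; simp
  have key : ∀ r : L, r ∉ D → f ⁅x1, r⁆ = 0 → f ⁅x2, r⁆ = 0 →
      LinearIndependent F ![x1, x2, x3, r, x5] := by
    intro r hr hr1 hr2
    rw [Fintype.linearIndependent_iff]
    intro a ha
    simp only [Fin.sum_univ_five] at ha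
    simp at ha
    have e1 := congrArg (fun t => f ⁅x1, t⁆) ha
    have e2 := congrArg (fun t => f ⁅x2, t⁆) ha
    have h21 : f ⁅x2, x1⁆ ≠ 0 := by
      rw [← lie_skew, map_neg]; exact neg_ne_zero.2 hx12
    simp [hr1, hr2, hfD0 _ _ hx3D, hfD0 _ _ hx5D, hx12, h21] at e1 e2
    rw [e1, e2] at ha
    simp at ha
    have e3 : a 3 = 0 := by
      by_contra h
      apply hr
      have : r = (a 3)⁻¹ • (-(a 2 • x3 + a 4 • x5)) := by
        rw [eq_inv_smul_iff₀ h, eq_neg_iff_add_eq_zero, ← ha]; abel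
      rw [this]
      exact D.smul_mem _ (D.neg_mem (D.add_mem (D.smul_mem _ hx3D) (D.smul_mem _ hx5D)))
    rw [e3] at ha
    have e4 := congrArg f ha
    simp [hfx5, hfx3] at e4
    rw [e4] at ha
    simp [hx50] at ha
    intro i
    fin_cases i <;> assumption
  have hcard5 : Fintype.card (Fin 5) = finrank F L := by simp [hdim]
  -- an element of the radical outside D
  obtain ⟨r, hrD, hr1, hr2⟩ : ∃ r : L, r ∉ D ∧ f ⁅x1, r⁆ = 0 ∧ f ⁅x2, r⁆ = 0 := by
    by_contra! h
    let T : L →ₗ[F] F × F :=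
      (f ∘ₗ (LieAlgebra.ad F L x1 : L →ₗ[F] L)).prod (f ∘ₗ (LieAlgebra.ad F L x2 : L →ₗ[F] L))
    have hT : LinearMap.ker T ≤ D.toSubmodule := by
      intro t ht
      have ht' : f ⁅x1, t⁆ = 0 ∧ f ⁅x2, t⁆ = 0 := by simpa [T] using ht
      by_contra hn
      exact h t hn ht'.1 ht'.2
    have h5 := T.finrank_range_add_finrank_ker
    have h6 := Submodule.finrank_mono hT
    have h7 := (LinearMap.range T).finrank_le
    have h8 : finrank F D.toSubmodule = 2 := hder
    simp at h7
    omega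
  have hrc : g ⁅r, c⁆ = 0 := by
    apply hjac r x1 x2 _ _ hx12
    · rw [← lie_skew, map_neg, hr1, neg_zero]
    · rw [← lie_skew, map_neg, hr2, neg_zero]
  obtain ⟨α, hα⟩ := hzx5 _ (hmem1 x1 r) hr1
  obtain ⟨w, hw⟩ : ∃ w, w = r - α • x3 := ⟨_, rfl⟩
  have hwD : w ∉ D := fun h => hrD (by
    have : r = w + α • x3 := by rw [hw]; abel
    rw [this]
    exact D.add_mem h (D.smul_mem _ hx3D))
  have hw1 : ⁅x1, w⁆ = 0 := by rw [hw, lie_sub, lie_smul, hα, ← hx5, sub_self]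
  have hw2 : f ⁅x2, w⁆ = 0 := by rw [hw, lie_sub, lie_smul, h23]; simp [hr2]
  have hc3 : ⁅x3, c⁆ = 0 := by rw [← lie_skew, hxd c x3 hx3D]; simp
  have hw3 : ⁅w, x3⁆ = 0 := by rw [hxd w x3 hx3D, hw, sub_lie, smul_lie, hc3]; simp [hrc]
  obtain ⟨β, hβ⟩ := hzx5 _ (hmem1 x2 w) hw2
  have hβ0 : β ≠ 0 := by
    rintro rfl
    apply hwD
    apply hstem
    let b := basisOfLinearIndependentOfCardEqFinrank (key w hwD (by simp [hw1]) hw2) hcard5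
    have hT : (LieAlgebra.ad F L w : L →ₗ[F] L) = 0 := by
      apply b.ext
      intro i
      have h1' : ⁅w, x1⁆ = 0 := by rw [← lie_skew, hw1, neg_zero]
      have h2' : ⁅w, x2⁆ = 0 := by rw [← lie_skew, hβ]; simp
      fin_cases i <;> simp [b, h1', h2', hw3, hc5]
    rw [LieModule.mem_maxTrivSubmodule]
    intro x
    have h0 : ⁅w, x⁆ = 0 := LinearMap.congr_fun hT x
    rw [← lie_skew, h0, neg_zero]
  have hx4D : β⁻¹ • w ∉ D := fun h => hwD (by
    have := D.smul_mem β h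
    rwa [smul_inv_smul₀ hβ0] at this)
  let b := basisOfLinearIndependentOfCardEqFinrank
    (key (β⁻¹ • w) hx4D (by simp [hw1]) (by simp [hw2])) hcard5
  have b0 : b 0 = x1 := by simp [b]
  have b1 : b 1 = x2 := by simp [b]
  have b2 : b 2 = x3 := by simp [b]
  have b3 : b 3 = β⁻¹ • w := by simp [b]
  have b4 : b 4 = x5 := by simp [b]
  have hw3' : ⁅x3, w⁆ = 0 := by rw [← lie_skew, hw3, neg_zero]
  refine ⟨b, ?_, ?_, ?_, ?_⟩
  · rw [b0, b1, b2, hx3]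
  · rw [b0, b2, b4, hx5]
  · rw [b1, b3, b4, lie_smul, hβ, inv_smul_smul₀ hβ0]
  · clear_value b
    intro i j hij n1 n2 n3
    fin_cases i <;> fin_cases j <;> simp at hij n1 n2 n3 <;>
      simp [b0, b1, b2, b3, b4, hw1, h23, hw3', hc5]
end

section
/- Let L be a 6-dimensional nilpotent Lie algebra over a field F of nilpotency class 3 with dim [L,L] = 2 such that L is stem (i.e. Z(L) ⊆ [L,L]). Then L is isomorphic to the Lie algebra L_{6,10} over F with basis x₁,…,x₆ and nonzero brackets [x₁,x₂] = x₃, [x₁,x₃] = x₆, [x₄,x₅] = x₆. -/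
open Module

universe u

/-- `L` is isomorphic to `L_{6,10}`: basis `x₁,…,x₆` with `[x₁,x₂]=x₃`, `[x₁,x₃]=x₆`, `[x₄,x₅]=x₆`. -/
def IsL610 (F : Type u) (L : Type u) [Field F] [LieRing L] [LieAlgebra F L] : Prop :=
  ∃ b : Basis (Fin 6) F L,
    ⁅b 0, b 1⁆ = b 2 ∧
    ⁅b 0, b 2⁆ = b 5 ∧
    ⁅b 3, b 4⁆ = b 5 ∧
    ∀ i j : Fin 6, i < j → (i, j) ≠ (0, 1) → (i, j) ≠ (0, 2) → (i, j) ≠ (3, 4) → ⁅b i, b j⁆ = 0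

/-- Six vectors in a six-dimensional space that are independent span it. -/
theorem span_of_six {F L : Type*} [Field F] [AddCommGroup L] [Module F L] [FiniteDimensional F L]
    (hdim : finrank F L = 6) (v : Fin 6 → L)
    (h : ∀ a : Fin 6 → F, a 0 • v 0 + a 1 • v 1 + a 2 • v 2 + a 3 • v 3 + a 4 • v 4 + a 5 • v 5 = 0 →
      a 0 = 0 ∧ a 1 = 0 ∧ a 2 = 0 ∧ a 3 = 0 ∧ a 4 = 0 ∧ a 5 = 0) :
    ∃ b : Basis (Fin 6) F L, ∀ i, b i = v i := by
  have hli : LinearIndependent F v := by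
    rw [Fintype.linearIndependent_iff]
    intro g hg
    obtain ⟨h0, h1, h2, h3, h4, h5⟩ := h g (by rw [← hg]; simp [Fin.sum_univ_six])
    intro i
    fin_cases i <;> assumption
  refine ⟨basisOfLinearIndependentOfCardEqFinrank hli (by simp [hdim]), fun i => by simp⟩

/-- Membership data of the derived subalgebra. -/
theorem step_one (F L : Type*) [Field F] [LieRing L] [LieAlgebra F L] [FiniteDimensional F L]
    (hclass : LieModule.lowerCentralSeries F L L 2 ≠ ⊥ ∧ LieModule.lowerCentralSeries F L L 3 = ⊥) :
    (∀ a b : L, ⁅a, b⁆ ∈ LieModule.lowerCentralSeries F L L 1) ∧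
    (∀ x y u : L, u ∈ LieModule.lowerCentralSeries F L L 1 → ⁅y, ⁅x, u⁆⁆ = 0) ∧
    ∃ x a b : L, ⁅x, ⁅a, b⁆⁆ ≠ 0 := by
  have hD : ∀ a b : L, ⁅a, b⁆ ∈ LieModule.lowerCentralSeries F L L 1 := by
    intro a b
    rw [LieModule.lowerCentralSeries_succ]
    exact LieSubmodule.lie_mem_lie (LieSubmodule.mem_top a) (by simp)
  have hD2 : ∀ a u : L, ∀ k, u ∈ LieModule.lowerCentralSeries F L L k →
      ⁅a, u⁆ ∈ LieModule.lowerCentralSeries F L L (k+1) := by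
    intro a u k hu
    rw [LieModule.lowerCentralSeries_succ]
    exact LieSubmodule.lie_mem_lie (LieSubmodule.mem_top a) hu
  refine ⟨hD, ?_, ?_⟩
  · intro x y u hu
    have := hD2 y _ _ (hD2 x u 1 hu)
    rw [show (1+1+1 : ℕ) = 3 from rfl, hclass.2] at this
    simpa using this
  · by_contra! hcon
    apply hclass.1
    rw [show (2:ℕ) = 1+1 from rfl, LieModule.lowerCentralSeries_succ, LieSubmodule.lie_eq_bot_iff]
    intro x _ m hm
    rw [show (1:ℕ) = 0+1 from rfl, LieModule.lowerCentralSeries_succ,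
      ← LieSubmodule.mem_toSubmodule, LieSubmodule.lieIdeal_oper_eq_linear_span'] at hm
    induction hm using Submodule.span_induction with
    | mem u hu => obtain ⟨a, _, b, _, rfl⟩ := hu; exact hcon x a b
    | zero => simp
    | add u v _ _ hu hv => rw [lie_add, hu, hv, add_zero]
    | smul c u _ hu => rw [lie_smul, hu, smul_zero]

/-- The derived algebra is spanned by `w` and `⁅x, w⁆`. -/
theorem coords (F L : Type*) [Field F] [LieRing L] [LieAlgebra F L] [FiniteDimensional F L]
    (D : LieIdeal F L) (hder : finrank F D = 2)
    (hD : ∀ a b : L, ⁅a, b⁆ ∈ D)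
    (hZ : ∀ x y u : L, u ∈ D → ⁅y, ⁅x, u⁆⁆ = 0)
    (x w : L) (hw : w ∈ D) (hne : ⁅x, w⁆ ≠ 0) (u : L) (hu : u ∈ D) :
    ∃ p q : F, u = p • w + q • ⁅x, w⁆ := by
  have hli : LinearIndependent F ![(⟨w, hw⟩ : D), ⟨⁅x, w⁆, hD x w⟩] := by
    rw [LinearIndependent.pair_iff]
    intro s t hst
    have h1 : s • w + t • ⁅x, w⁆ = 0 := congrArg Subtype.val hst
    have h2 : s • ⁅x, w⁆ = 0 := by
      have := congrArg (fun v => ⁅x, v⁆) h1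
      simpa [hZ x x w hw] using this
    have hs : s = 0 := by simpa [hne] using h2
    refine ⟨hs, ?_⟩
    simpa [hs, hne] using h1
  have hsp := hli.span_eq_top_of_card_eq_finrank (by rw [hder]; simp)
  have hmem : (⟨u, hu⟩ : D) ∈ Submodule.span F (Set.range ![(⟨w, hw⟩ : D), ⟨⁅x, w⁆, hD x w⟩]) := by
    rw [hsp]; trivial
  simp only [Matrix.range_cons, Matrix.range_empty, Set.union_empty, Set.singleton_union,
    Submodule.mem_span_pair] at hmem
  obtain ⟨p, q, hpq⟩ := hmem
  exact ⟨p, q, (congrArg Subtype.val hpq).symm⟩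

/-- A 6-dimensional stem nilpotent Lie algebra of class 3 with 2-dimensional derived
subalgebra is isomorphic to `L_{6,10}`. -/
theorem stem_class_three_dim_six_iso_L610
    (F L : Type u) [Field F] [LieRing L] [LieAlgebra F L] [FiniteDimensional F L]
    (hdim : finrank F L = 6)
    (hclass : LieModule.lowerCentralSeries F L L 2 ≠ ⊥ ∧ LieModule.lowerCentralSeries F L L 3 = ⊥)
    (hder : finrank F ↥(LieModule.lowerCentralSeries F L L 1) = 2)
    (hstem : LieAlgebra.center F L ≤ LieModule.lowerCentralSeries F L L 1) :
    IsL610 F L := by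
  obtain ⟨hD, hZ, x, a, b, hne⟩ := step_one F L hclass
  have hco := coords F L _ hder hD hZ
  generalize LieModule.lowerCentralSeries F L L 1 = D at *
  -- elements of the derived algebra killed by x are multiples of z
  have hkill : ∀ w ∈ D, ⁅x, w⁆ ≠ 0 → ∀ u ∈ D, ⁅x, u⁆ = 0 → ∃ q : F, u = q • ⁅x, w⁆ := by
    intro w hw hn u hu h0
    obtain ⟨p, q, rfl⟩ := hco x w hw hn u hu
    have hp : p = 0 := by simpa [hZ x x w hw, hn] using h0
    exact ⟨q, by simp [hp]⟩
  -- the centralizer of w has brackets in the line spanned by z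
  have hcent : ∀ w ∈ D, ⁅x, w⁆ ≠ 0 → ∀ c d : L, ⁅c, w⁆ = 0 → ⁅d, w⁆ = 0 →
      ∃ q : F, ⁅c, d⁆ = q • ⁅x, w⁆ := by
    intro w hw hn c d hc hd
    apply hkill w hw hn _ (hD c d)
    have hcc : ∀ e u : L, ⁅e, w⁆ = 0 → u ∈ D → ⁅e, u⁆ = 0 := by
      intro e u he hu
      obtain ⟨p, q, rfl⟩ := hco x w hw hn u hu
      simp [he, hZ x e w hw]
    rw [leibniz_lie, hcc c _ hc (hD x d), ← lie_skew, hcc d _ hd (hD x c)]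
    simp
  -- choose x₂
  have hx2 : ∃ y : L, ⁅x, ⁅x, y⁆⁆ ≠ 0 ∧ ⁅y, ⁅x, y⁆⁆ = 0 := by
    have hphi : ∀ e : L, ∃ q : F, ⁅e - q • x, ⁅a, b⁆⁆ = 0 := by
      intro e
      obtain ⟨q, hq⟩ := hkill _ (hD a b) hne _ (hD e ⁅a, b⁆) (hZ _ _ _ (hD a b))
      exact ⟨q, by simp [hq]⟩
    have hgood : ∀ y : L, ⁅y, ⁅a, b⁆⁆ = 0 → ⁅y, ⁅x, y⁆⁆ = 0 := by
      intro y hy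
      obtain ⟨p, q, h⟩ := hco x _ (hD a b) hne _ (hD x y)
      rw [h]
      simp [hy, hZ x y _ (hD a b)]
    by_contra! hcon
    obtain ⟨p, hp⟩ := hphi a
    obtain ⟨q, hq⟩ := hphi b
    have h1 : ⁅x, ⁅x, a - p • x⁆⁆ = 0 := by
      by_contra h
      exact hcon _ h (hgood _ hp)
    have h2 : ⁅x, ⁅x, b - q • x⁆⁆ = 0 := by
      by_contra h
      exact hcon _ h (hgood _ hq)
    obtain ⟨r, hr⟩ := hcent _ (hD a b) hne _ _ hp hq
    have h3 : ⁅x, ⁅a - p • x, b - q • x⁆⁆ = 0 := by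
      rw [hr, lie_smul, hZ _ _ _ (hD a b), smul_zero]
    apply hne
    have h4 : ⁅a, b⁆ = ⁅a - p • x, b - q • x⁆ + p • ⁅x, b - q • x⁆ - q • ⁅x, a - p • x⁆ := by
      simp only [sub_lie, lie_sub, smul_lie, lie_smul, lie_self, smul_zero, sub_zero]
      rw [← lie_skew x a]
      simp only [smul_neg]
      abel
    rw [h4, lie_sub, lie_add, lie_smul, lie_smul, h1, h2, h3]
    simp
  obtain ⟨y, hn, hyw⟩ := hx2
  have hw : ⁅x, y⁆ ∈ D := hD x y
  clear hne a b
  obtain ⟨w, hwdef⟩ : ∃ w, w = ⁅x, y⁆ := ⟨_, rfl⟩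
  rw [← hwdef] at hn hyw hw
  obtain ⟨z, hzdef⟩ : ∃ z, z = ⁅x, w⁆ := ⟨_, rfl⟩
  have hzc : ∀ e : L, ⁅e, z⁆ = 0 := fun e => hzdef ▸ hZ x e w hw
  have hzc2 : ∀ e : L, ⁅z, e⁆ = 0 := fun e => by rw [← lie_skew, hzc, neg_zero]
  replace hco := hco x w hw hn
  replace hkill := hkill w hw hn
  replace hcent := hcent w hw hn
  rw [← hzdef] at hn
  simp only [← hzdef] at hco hkill hcent
  have hwz : ∀ p q : F, p • w + q • z = 0 → p = 0 ∧ q = 0 := by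
    intro p q h
    have h1 := congrArg (fun v => ⁅x, v⁆) h
    have hp : p = 0 := by simpa [hzc, ← hzdef, hn] using h1
    refine ⟨hp, ?_⟩
    simpa [hp, hn] using h
  -- dual functionals
  have hli : LinearIndependent F ![w, z] := LinearIndependent.pair_iff.2 hwz
  obtain ⟨g, hg⟩ : ∃ g : L →ₗ[F] (Fin 2 → F), g w = ![1, 0] ∧ g z = ![0, 1] := by
    obtain ⟨g, hg⟩ := (Basis.span hli).constr F ![(![1, 0] : Fin 2 → F), ![0, 1]] |>.exists_extend
    refine ⟨g, ?_, ?_⟩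
    · have h0 := congrArg (fun f => f (Basis.span hli 0)) hg
      rw [Basis.constr_basis, LinearMap.comp_apply, Submodule.subtype_apply,
        Basis.span_apply] at h0
      exact h0
    · have h0 := congrArg (fun f => f (Basis.span hli 1)) hg
      rw [Basis.constr_basis, LinearMap.comp_apply, Submodule.subtype_apply,
        Basis.span_apply] at h0
      exact h0
  -- the common kernel
  let T : L →ₗ[F] (Fin 4 → F) := LinearMap.pi ![LinearMap.proj 1 ∘ₗ g,
    LinearMap.proj 1 ∘ₗ g ∘ₗ (LieAlgebra.ad F L w : L →ₗ[F] L),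
    LinearMap.proj 0 ∘ₗ g ∘ₗ (LieAlgebra.ad F L x : L →ₗ[F] L),
    LinearMap.proj 1 ∘ₗ g ∘ₗ (LieAlgebra.ad F L x : L →ₗ[F] L)]
  have hT : ∀ k : L, T k = 0 → g k 1 = 0 ∧ ⁅k, w⁆ = 0 ∧ ⁅x, k⁆ = 0 := by
    intro k hk
    have t0 : g k 1 = 0 := congrFun hk 0
    have t1 : g ⁅w, k⁆ 1 = 0 := congrFun hk 1
    have t2 : g ⁅x, k⁆ 0 = 0 := congrFun hk 2
    have t3 : g ⁅x, k⁆ 1 = 0 := congrFun hk 3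
    refine ⟨t0, ?_, ?_⟩
    · rw [← lie_skew, neg_eq_zero]
      obtain ⟨q, hq⟩ := hkill ⁅w, k⁆ (hD _ _) (by rw [← lie_skew w k, lie_neg, hZ _ _ _ hw, neg_zero])
      rw [hq] at t1 ⊢
      have : q = 0 := by simpa [hg.2] using t1
      simp [this]
    · obtain ⟨p, q, h⟩ := hco _ (hD x k)
      rw [h] at t2 t3 ⊢
      have hp : p = 0 := by simpa [hg.1, hg.2] using t2
      have hq : q = 0 := by simpa [hg.1, hg.2] using t3
      simp [hp, hq]
  have hker : 2 ≤ finrank F (LinearMap.ker T) := by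
    have h1 := T.finrank_range_add_finrank_ker
    have h2 : finrank F (LinearMap.range T) ≤ 4 := by
      simpa using Submodule.finrank_le (LinearMap.range T)
    omega
  obtain ⟨f, hf⟩ := exists_linearIndependent_of_le_finrank hker
  obtain ⟨k, hk⟩ : ∃ k : L, k = f 0 := ⟨_, rfl⟩
  obtain ⟨l, hl⟩ : ∃ l : L, l = f 1 := ⟨_, rfl⟩
  have hkl : ∀ s t : F, s • k + t • l = 0 → s = 0 ∧ t = 0 := by
    intro s t h
    have h1 : s • f 0 + t • f 1 = 0 := by
      apply Subtype.ext
      simpa [hk, hl] using h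
    have h2 := Fintype.linearIndependent_iff.1 hf ![s, t] (by simpa [Fin.sum_univ_two] using h1)
    exact ⟨h2 0, h2 1⟩
  obtain ⟨hgk, hkw, hxk⟩ := hT k (by rw [hk]; exact (f 0).2)
  obtain ⟨hgl, hlw, hxl⟩ := hT l (by rw [hl]; exact (f 1).2)
  clear hk hl hf hker hT f T
  have hxz : ⁅x, w⁆ = z := hzdef.symm
  have hxy : ⁅x, y⁆ = w := hwdef.symm
  -- a first basis
  obtain ⟨B, hB⟩ := span_of_six hdim ![x, y, w, k, l, z] (by
    intro c h
    simp only [Matrix.cons_val] at h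
    have hw1 := congrArg (fun v => ⁅v, w⁆) h
    have c0 : c 0 = 0 := by simpa [hxz, hyw, hkw, hlw, hzc2, hn] using hw1
    have hx1 := congrArg (fun v => ⁅x, v⁆) h
    have h12 : c 1 = 0 ∧ c 2 = 0 := by
      apply hwz
      simpa [hxz, hxy, hxk, hxl, hzc] using hx1
    have hg1 := congrArg (fun v => g v 1) h
    have c5 : c 5 = 0 := by simpa [c0, h12.1, h12.2, hgk, hgl, hg.2] using hg1
    have h34 : c 3 = 0 ∧ c 4 = 0 := by
      apply hkl
      simpa [c0, h12.1, h12.2, c5] using h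
    exact ⟨c0, h12.1, h12.2, h34.1, h34.2, c5⟩)
  -- no nonzero combination of k and l is central
  have hnc : ∀ s t : F, ⁅y, s • k + t • l⁆ = 0 → ⁅k, s • k + t • l⁆ = 0 →
      ⁅l, s • k + t • l⁆ = 0 → s = 0 ∧ t = 0 := by
    intro s t hy hk hl
    apply hkl
    obtain ⟨v, hv⟩ : ∃ v, v = s • k + t • l := ⟨_, rfl⟩
    have hxv : ⁅x, v⁆ = 0 := by simp [hv, hxk, hxl]
    have hwv : ⁅w, v⁆ = 0 := by
      rw [← lie_skew, neg_eq_zero]; simp [hv, hkw, hlw]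
    have hgv : g v 1 = 0 := by simp [hv, hgk, hgl]
    rw [← hv] at hy hk hl ⊢
    have hvc : v ∈ LieAlgebra.center F L := by
      rw [LieModule.mem_maxTrivSubmodule]
      intro e
      rw [← B.sum_repr e]
      simp [Fin.sum_univ_six, hB, hxv, hy, hwv, hk, hl, hzc2]
    obtain ⟨q, hq⟩ := hkill v (hstem hvc) hxv
    rw [hq] at hgv ⊢
    have : q = 0 := by simpa [hg.2] using hgv
    simp [this]
  obtain ⟨r, hr⟩ := hcent k l hkw hlw
  obtain ⟨s, hs⟩ := hcent y k hyw hkw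
  obtain ⟨t, ht⟩ := hcent y l hyw hlw
  have hr' : ⁅l, k⁆ = -(r • z) := by rw [← lie_skew, hr]
  have hr0 : r ≠ 0 := by
    intro h0
    rw [h0, zero_smul] at hr hr'
    rw [neg_zero] at hr'
    have h1 := hnc t (-s) (by simp [hs, ht, smul_smul, mul_comm]) (by simp [hr]) (by simp [hr'])
    have hs0 : s = 0 := by simpa using h1.2
    have h2 := hnc 1 0 (by simp [hs, hs0]) (by simp) (by simp [hr'])
    exact one_ne_zero h2.1
  -- normalisation
  obtain ⟨m, hm⟩ : ∃ m, m = r⁻¹ • l := ⟨_, rfl⟩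
  have hkm : ⁅k, m⁆ = z := by simp [hm, hr, smul_smul, hr0]
  have hmk : ⁅m, k⁆ = -z := by rw [← lie_skew, hkm]
  have hym : ⁅y, m⁆ = (r⁻¹ * t) • z := by simp [hm, ht, smul_smul]
  have hxm : ⁅x, m⁆ = 0 := by simp [hm, hxl]
  have hmw : ⁅m, w⁆ = 0 := by simp [hm, hlw]
  obtain ⟨y', hy'⟩ : ∃ y', y' = y - (r⁻¹ * t) • k + s • m := ⟨_, rfl⟩
  have hxy' : ⁅x, y'⁆ = w := by simp [hy', hxy, hxk, hxm]
  have hyw' : ⁅y', w⁆ = 0 := by simp [hy', hyw, hkw, hmw]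
  have hyk' : ⁅y', k⁆ = 0 := by simp [hy', hs, hmk]
  have hym' : ⁅y', m⁆ = 0 := by simp [hy', hym, hkm]
  have hwk : ⁅w, k⁆ = 0 := by rw [← lie_skew, hkw, neg_zero]
  have hwm : ⁅w, m⁆ = 0 := by rw [← lie_skew, hmw, neg_zero]
  obtain ⟨E, hE⟩ := span_of_six hdim ![x, y', w, k, m, z] (by
    intro c h
    simp only [Matrix.cons_val] at h
    have hw1 := congrArg (fun v => ⁅v, w⁆) h
    have c0 : c 0 = 0 := by simpa [hxz, hyw', hkw, hmw, hzc2, hn] using hw1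
    have hx1 := congrArg (fun v => ⁅x, v⁆) h
    have h12 : c 1 = 0 ∧ c 2 = 0 := by
      apply hwz
      simpa [hxz, hxy', hxk, hxm, hzc] using hx1
    have hm1 := congrArg (fun v => ⁅v, m⁆) h
    have c3 : c 3 = 0 := by simpa [c0, h12.1, h12.2, hkm, hzc2, hn] using hm1
    have hk1 := congrArg (fun v => ⁅v, k⁆) h
    have c4 : c 4 = 0 := by simpa [c0, h12.1, h12.2, hmk, hzc2, hn] using hk1
    have c5 : c 5 = 0 := by simpa [c0, h12.1, h12.2, c3, c4, hn] using h
    exact ⟨c0, h12.1, h12.2, c3, c4, c5⟩)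
  refine ⟨E, by simp [hE, hxy'], by simp [hE, hxz], by simp [hE, hkm], ?_⟩
  intro i j hij h1 h2 h3
  rw [hE, hE]
  fin_cases i <;> fin_cases j <;>
    first
    | exact absurd rfl h1
    | exact absurd rfl h2
    | exact absurd rfl h3
    | exact absurd hij (by decide)
    | simp [hxk, hxm, hyw', hyk', hym', hwk, hwm, hzc]
end

section
/- Let T be a finite-dimensional nilpotent Lie algebra over a field F of nilpotency class 3 with dim [T,T] = 2 and dim T ≥ 6 such that T is stem (i.e. Z(T) ⊆ [T,T]). Then T is not capable. -/
open Module

universe u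

/-- The lifting argument in `E`. -/
lemma lift_argument {F E T : Type u} [Field F] [LieRing E] [LieAlgebra F E]
    [LieRing T] [LieAlgebra F T] (π : E →ₗ⁅F⁆ T) (hsurj : Function.Surjective π)
    (hker : ∀ e : E, π e = 0 ↔ ∀ e' : E, ⁅e, e'⁆ = 0)
    (x w y z a b : T) (hy : ⁅x, w⁆ = y) (hz : ⁅x, y⁆ = z) (hwy : ⁅w, y⁆ = 0)
    (hzc : ∀ t : T, ⁅z, t⁆ = 0)
    (ha : ⁅x, a⁆ = 0) (hb : ⁅x, b⁆ = 0) (hab : ⁅a, b⁆ = z)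
    (hdec : ∀ t : T, ∃ (p q r : F) (c : T), t = p • x + q • w + r • y + c ∧
      ⁅x, c⁆ = 0 ∧ ⁅y, c⁆ = 0) : z = 0 := by
  obtain ⟨X, hX⟩ := hsurj x
  obtain ⟨W, hW⟩ := hsurj w
  obtain ⟨A, hA⟩ := hsurj a
  obtain ⟨B, hB⟩ := hsurj b
  have hπY : π ⁅X, W⁆ = y := by rw [LieHom.map_lie, hX, hW, hy]
  obtain ⟨Y, hYd⟩ : ∃ Y, Y = ⁅X, W⁆ := ⟨_, rfl⟩
  rw [← hYd] at hπY
  have hπZ : π ⁅X, Y⁆ = z := by rw [LieHom.map_lie, hX, hπY, hz]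
  obtain ⟨Z, hZd⟩ : ∃ Z, Z = ⁅X, Y⁆ := ⟨_, rfl⟩
  rw [← hZd] at hπZ
  -- an element killed by π is central, on both sides
  have cl : ∀ e, π e = 0 → ∀ e' : E, ⁅e, e'⁆ = 0 := fun e h => (hker e).1 h
  have cr : ∀ e, π e = 0 → ∀ e' : E, ⁅e', e⁆ = 0 := fun e h e' => by
    rw [← lie_skew, cl e h, neg_zero]
  have hXA := cr ⁅X, A⁆ (by rw [LieHom.map_lie, hX, hA, ha])
  have hXB := cr ⁅X, B⁆ (by rw [LieHom.map_lie, hX, hB, hb])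
  have hXA' := cl ⁅X, A⁆ (by rw [LieHom.map_lie, hX, hA, ha])
  have hXZ : ⁅X, Z⁆ = 0 := by
    have h1 : ⁅X, Z - ⁅A, B⁆⁆ = 0 := cr _ (by
      rw [map_sub, LieHom.map_lie, hA, hB, hab, hπZ, sub_self]) _
    rw [lie_sub, sub_eq_zero] at h1
    rw [h1, leibniz_lie, hXA', hXB, add_zero]
  have hZC : ∀ C : E, π ⁅Y, C⁆ = 0 → ⁅Z, C⁆ = -⁅Y, ⁅X, C⁆⁆ := by
    intro C hC
    rw [hZd, lie_lie, cr _ hC, zero_sub]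
  have hZW : ⁅Z, W⁆ = 0 := by
    rw [hZC W (by rw [LieHom.map_lie, hπY, hW, ← lie_skew, hwy, neg_zero]), ← hYd, lie_self,
      neg_zero]
  have hZX : ⁅Z, X⁆ = 0 := by rw [← lie_skew, hXZ, neg_zero]
  have hZY : ⁅Z, Y⁆ = 0 := by
    rw [hYd, leibniz_lie, hZX, hZW, zero_lie, lie_zero, add_zero]
  rw [← hπZ, hker]
  intro e
  obtain ⟨p, q, r, c, ht, hc1, hc2⟩ := hdec (π e)
  obtain ⟨C, hCd⟩ : ∃ C, C = e - (p • X + q • W + r • Y) := ⟨_, rfl⟩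
  have hπC : π C = c := by
    rw [hCd, map_sub, ht]
    simp only [map_add, map_smul, hX, hW, hπY]
    abel
  have hZC' : ⁅Z, C⁆ = 0 := by
    rw [hZC C (by rw [LieHom.map_lie, hπY, hπC, hc2]),
      cr ⁅X, C⁆ (by rw [LieHom.map_lie, hX, hπC, hc1]), neg_zero]
  have he : e = C + (p • X + q • W + r • Y) := by rw [hCd]; abel
  rw [he]
  simp [hZC', hZX, hZW, hZY]

/-- Basic structure given `x` and `y ∈ L1` with `[x,y] ≠ 0`. -/
lemma basic_structure {F T : Type u} [Field F] [LieRing T] [LieAlgebra F T]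
    (L : Submodule F T) (hL : finrank F L = 2) (hbr : ∀ s t : T, ⁅s, t⁆ ∈ L)
    (h3 : ∀ r s t : T, ∀ l ∈ L, ⁅r, ⁅s, l⁆⁆ = 0)
    (x y : T) (hy : y ∈ L) (hz : ⁅x, y⁆ ≠ 0) :
    (∀ l ∈ L, ∃ p q : F, l = p • y + q • ⁅x, y⁆) ∧
    (∀ l ∈ L, ⁅x, l⁆ = 0 → ∃ q : F, l = q • ⁅x, y⁆) ∧
    (∀ t : T, ∃ q : F, ⁅t - q • x, y⁆ = 0) := by
  have hli : LinearIndependent F ![y, ⁅x, y⁆] := by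
    rw [LinearIndependent.pair_iff]
    intro s t h
    have h1 : ⁅x, s • y + t • ⁅x, y⁆⁆ = 0 := by rw [h, lie_zero]
    rw [lie_add, lie_smul, lie_smul, h3 x x x y hy, smul_zero, add_zero] at h1
    have hs : s = 0 := (smul_eq_zero.1 h1).resolve_right hz
    subst hs
    rw [zero_smul, zero_add] at h
    exact ⟨rfl, (smul_eq_zero.1 h).resolve_right hz⟩
  have hspan : Submodule.span F {y, ⁅x, y⁆} = L := by
    have : FiniteDimensional F L := Module.finite_of_finrank_pos (by omega)
    apply Submodule.eq_of_le_of_finrank_eq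
    · rw [Submodule.span_le]
      rintro v (rfl | rfl)
      · exact hy
      · exact hbr _ _
    · have := finrank_span_eq_card hli
      rw [Matrix.range_cons_cons_empty, Fintype.card_fin] at this
      rw [hL, this]
  have c1 : ∀ l ∈ L, ∃ p q : F, l = p • y + q • ⁅x, y⁆ := by
    intro l hl
    rw [← hspan, Submodule.mem_span_pair] at hl
    obtain ⟨p, q, h⟩ := hl
    exact ⟨p, q, h.symm⟩
  have c2 : ∀ l ∈ L, ⁅x, l⁆ = 0 → ∃ q : F, l = q • ⁅x, y⁆ := by
    intro l hl h
    obtain ⟨p, q, rfl⟩ := c1 l hl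
    rw [lie_add, lie_smul, lie_smul, h3 x x x y hy, smul_zero, add_zero] at h
    have hs : p = 0 := (smul_eq_zero.1 h).resolve_right hz
    exact ⟨q, by rw [hs, zero_smul, zero_add]⟩
  refine ⟨c1, c2, fun t => ?_⟩
  obtain ⟨q, hq⟩ := c2 ⁅t, y⁆ (hbr _ _) (h3 _ _ x _ hy)
  exact ⟨q, by rw [sub_lie, smul_lie, hq, sub_self]⟩

lemma structure_T {F T : Type u} [Field F] [LieRing T] [LieAlgebra F T]
    [FiniteDimensional F T] (hdim : 6 ≤ finrank F T)
    (L : Submodule F T) (hL : finrank F L = 2) (hbr : ∀ s t : T, ⁅s, t⁆ ∈ L)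
    (hgen : ∀ M : Submodule F T, (∀ s t : T, ⁅s, t⁆ ∈ M) → L ≤ M)
    (h3 : ∀ r s t : T, ∀ l ∈ L, ⁅r, ⁅s, l⁆⁆ = 0)
    (hne : ∃ x : T, ∃ y ∈ L, ⁅x, y⁆ ≠ 0)
    (hst : ∀ t : T, (∀ s : T, ⁅t, s⁆ = 0) → t ∈ L) :
    ∃ x w y z a b : T, z ≠ 0 ∧ ⁅x, w⁆ = y ∧ ⁅x, y⁆ = z ∧ ⁅w, y⁆ = 0 ∧
    (∀ t : T, ⁅z, t⁆ = 0) ∧ ⁅x, a⁆ = 0 ∧ ⁅x, b⁆ = 0 ∧ ⁅a, b⁆ = z ∧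
    (∀ t : T, ∃ (p q r : F) (c : T), t = p • x + q • w + r • y + c ∧
      ⁅x, c⁆ = 0 ∧ ⁅y, c⁆ = 0) := by
  obtain ⟨x, y0, hy0, hz0⟩ := hne
  obtain ⟨c1, c2, c3⟩ := basic_structure L hL hbr h3 x y0 hy0 hz0
  have zc : ∀ s l : T, l ∈ L → ∀ t : T, ⁅⁅s, l⁆, t⁆ = 0 := fun s l hl t => by
    rw [← lie_skew, h3 t s t l hl, neg_zero]
  -- commuting with `y0` means commuting with `L`
  have hcomm : ∀ c : T, ⁅c, y0⁆ = 0 → ∀ l ∈ L, ⁅c, l⁆ = 0 := by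
    intro c hc l hl
    obtain ⟨p, q, rfl⟩ := c1 l hl
    rw [lie_add, lie_smul, lie_smul, hc, h3 c x x y0 hy0, smul_zero, smul_zero, add_zero]
  have hcomm' : ∀ c : T, ⁅c, y0⁆ = 0 → ∀ l ∈ L, ⁅l, c⁆ = 0 := by
    intro c hc l hl
    rw [← lie_skew, hcomm c hc l hl, neg_zero]
  have hCC : ∀ c d : T, ⁅c, y0⁆ = 0 → ⁅d, y0⁆ = 0 → ⁅x, ⁅c, d⁆⁆ = 0 := by
    intro c d hc hd
    rw [leibniz_lie, hcomm' d hd _ (hbr _ _), hcomm c hc _ (hbr _ _), add_zero]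
  -- find w
  obtain ⟨w, hw, hxw⟩ : ∃ w : T, ⁅w, y0⁆ = 0 ∧ ⁅x, ⁅x, w⁆⁆ ≠ 0 := by
    by_contra hcon
    push Not at hcon
    have : L ≤ LinearMap.ker (LieAlgebra.ad F T x) := by
      apply hgen
      intro s t
      obtain ⟨p, hp⟩ := c3 s
      obtain ⟨q, hq⟩ := c3 t
      obtain ⟨s', hs'⟩ : ∃ s', s' = s - p • x := ⟨_, rfl⟩
      obtain ⟨t', ht'⟩ : ∃ t', t' = t - q • x := ⟨_, rfl⟩
      rw [← hs'] at hp
      rw [← ht'] at hq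
      have hs : s = s' + p • x := by rw [hs']; abel
      have ht : t = t' + q • x := by rw [ht']; abel
      have e1 : ⁅x, ⁅s', x⁆⁆ = 0 := by rw [← lie_skew s' x, lie_neg, hcon s' hp, neg_zero]
      show ⁅x, ⁅s, t⁆⁆ = 0
      rw [hs, ht]
      simp [hCC s' t' hp hq, hcon t' hq, e1]
    exact hz0 (this hy0)
  obtain ⟨y, hyd⟩ : ∃ y, ⁅x, w⁆ = y := ⟨_, rfl⟩
  have hyL : y ∈ L := hyd ▸ hbr _ _
  rw [hyd] at hxw
  obtain ⟨d1, d2, d3⟩ := basic_structure L hL hbr h3 x y hyL hxw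
  obtain ⟨z, hzd⟩ : ∃ z, ⁅x, y⁆ = z := ⟨_, rfl⟩
  rw [hzd] at d1 d2 hxw
  have hzc : ∀ t : T, ⁅z, t⁆ = 0 := fun t => by rw [← hzd]; exact zc x y hyL t
  have hzc' : ∀ t : T, ⁅t, z⁆ = 0 := fun t => by rw [← hzd]; exact h3 t x x y hyL
  have hwy : ⁅w, y⁆ = 0 := hcomm w hw y hyL
  have hyw : ⁅y, w⁆ = 0 := by rw [← lie_skew, hwy, neg_zero]
  have hdec : ∀ t : T, ∃ (p q r : F) (c : T), t = p • x + q • w + r • y + c ∧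
      ⁅x, c⁆ = 0 ∧ ⁅y, c⁆ = 0 := by
    intro t
    obtain ⟨p, hp⟩ := d3 t
    obtain ⟨q, r, hqr⟩ := d1 ⁅x, t - p • x⁆ (hbr _ _)
    refine ⟨p, q, r, (t - p • x) - q • w - r • y, by abel, ?_, ?_⟩
    · rw [lie_sub, lie_sub, hqr, lie_smul, lie_smul, hyd, hzd]; abel
    · rw [lie_sub, lie_sub, ← lie_skew, hp, lie_smul, lie_smul, hyw, lie_self]; simp
  -- find a, b
  have hC1 : ∀ a b : T, ⁅x, a⁆ = 0 → ⁅x, b⁆ = 0 → ∃ q : F, ⁅a, b⁆ = q • z := by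
    intro a b ha hb
    apply d2 _ (hbr _ _)
    rw [leibniz_lie, ha, hb, zero_lie, lie_zero, add_zero]
  obtain ⟨a, b, ha, hb, hab⟩ : ∃ a b : T, ⁅x, a⁆ = 0 ∧ ⁅x, b⁆ = 0 ∧ ⁅a, b⁆ ≠ 0 := by
    by_contra hcon
    push Not at hcon
    have hCw : ∀ a : T, ⁅x, a⁆ = 0 → ⁅y, a⁆ = 0 → ∃ q : F, ⁅a, w⁆ = q • z := by
      intro a ha ha'
      apply d2 _ (hbr _ _)
      rw [leibniz_lie, ha, zero_lie, zero_add, hyd, ← lie_skew, ha', neg_zero]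
    have hcen : ∀ a : T, ⁅x, a⁆ = 0 → ⁅y, a⁆ = 0 → ⁅a, w⁆ = 0 → ∃ q : F, a = q • z := by
      intro a ha ha' haw
      apply d2 _ _ ha
      apply hst
      intro s
      obtain ⟨p, q, r, c, rfl, hc, hc'⟩ := hdec s
      have e1 : ⁅a, x⁆ = 0 := by rw [← lie_skew, ha, neg_zero]
      have e2 : ⁅a, y⁆ = 0 := by rw [← lie_skew, ha', neg_zero]
      simp [e1, e2, haw, hcon a c ha hc]
    obtain ⟨a0, ha0⟩ : ∃ a0 : T, ∀ c : T, ⁅x, c⁆ = 0 → ⁅y, c⁆ = 0 →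
        ∃ p q : F, c = p • a0 + q • z := by
      by_cases h : ∃ a0 : T, ⁅x, a0⁆ = 0 ∧ ⁅y, a0⁆ = 0 ∧ ⁅a0, w⁆ ≠ 0
      · obtain ⟨a0, h1, h2, h4⟩ := h
        refine ⟨a0, fun c hc hc' => ?_⟩
        obtain ⟨q0, hq0⟩ := hCw a0 h1 h2
        obtain ⟨q, hq⟩ := hCw c hc hc'
        have hq0' : q0 ≠ 0 := by
          rintro rfl
          exact h4 (by rw [hq0, zero_smul])
        obtain ⟨r, hr⟩ := hcen (c - (q / q0) • a0) (by simp [hc, h1]) (by simp [hc', h2])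
          (by rw [sub_lie, smul_lie, hq, hq0, smul_smul, div_mul_cancel₀ _ hq0', sub_self])
        exact ⟨q / q0, r, by rw [← hr]; abel⟩
      · push Not at h
        refine ⟨0, fun c hc hc' => ?_⟩
        obtain ⟨r, hr⟩ := hcen c hc hc' (h c hc hc')
        exact ⟨0, r, by rw [hr]; simp⟩
    have htop : Submodule.span F (Set.range ![x, w, y, a0, z]) = ⊤ := by
      rw [eq_top_iff]
      intro t _
      obtain ⟨p, q, r, c, rfl, hc, hc'⟩ := hdec t
      obtain ⟨m, n, rfl⟩ := ha0 c hc hc'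
      rw [Submodule.mem_span_range_iff_exists_fun]
      refine ⟨![p, q, r, m, n], ?_⟩
      simp [Fin.sum_univ_succ]
      abel
    have := finrank_range_le_card (R := F) ![x, w, y, a0, z]
    rw [Set.finrank, htop, finrank_top, Fintype.card_fin] at this
    omega
  obtain ⟨q, hq⟩ := hC1 a b ha hb
  have hq0 : q ≠ 0 := by
    rintro rfl
    exact hab (by rw [hq, zero_smul])
  exact ⟨x, w, y, z, q⁻¹ • a, b, hxw, hyd, hzd, hwy, hzc, by rw [lie_smul, ha, smul_zero], hb,
    by rw [smul_lie, hq, smul_smul, inv_mul_cancel₀ hq0, one_smul], hdec⟩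

/-- A finite-dimensional stem nilpotent Lie algebra of class 3 with 2-dimensional derived
subalgebra and dimension at least 6 is not capable. -/
theorem stem_class_three_dim_ge_six_not_capable
    (F T : Type u) [Field F] [LieRing T] [LieAlgebra F T] [FiniteDimensional F T]
    (hdim : 6 ≤ finrank F T)
    (hclass : LieModule.lowerCentralSeries F T T 2 ≠ ⊥ ∧ LieModule.lowerCentralSeries F T T 3 = ⊥)
    (hder : finrank F ↥(LieModule.lowerCentralSeries F T T 1) = 2)
    (hstem : LieAlgebra.center F T ≤ LieModule.lowerCentralSeries F T T 1) :
    ¬ IsCapable F T := by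

  rintro ⟨⟨E, e⟩⟩
  obtain ⟨hc2, hc3⟩ := hclass
  have hbr1 : ∀ s t : T, ⁅s, t⁆ ∈ LieModule.lowerCentralSeries F T T 1 := fun s t => by
    rw [LieModule.lowerCentralSeries_succ]
    exact LieSubmodule.lie_mem_lie (LieSubmodule.mem_top _) (by simp)
  have hbr2 : ∀ s t : T, t ∈ LieModule.lowerCentralSeries F T T 1 →
      ⁅s, t⁆ ∈ LieModule.lowerCentralSeries F T T 2 := fun s t h => by
    rw [LieModule.lowerCentralSeries_succ]
    exact LieSubmodule.lie_mem_lie (LieSubmodule.mem_top _) h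
  have hbr3 : ∀ s t : T, t ∈ LieModule.lowerCentralSeries F T T 2 → ⁅s, t⁆ = 0 := fun s t h => by
    rw [← LieSubmodule.mem_bot (R := F) (L := T), ← hc3, LieModule.lowerCentralSeries_succ]
    exact LieSubmodule.lie_mem_lie (LieSubmodule.mem_top _) h
  obtain ⟨x, w, y, z, a, b, hz, h1, h2, h3, h4, h5, h6, h7, h8⟩ := structure_T (F := F) hdim
    (LieModule.lowerCentralSeries F T T 1).toSubmodule hder hbr1
    (by
      intro M hM
      rw [LieModule.lowerCentralSeries_succ, LieSubmodule.lieIdeal_oper_eq_linear_span',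
        Submodule.span_le]
      rintro _ ⟨s, _, t, _, rfl⟩
      exact hM s t)
    (fun r s _ l hl => hbr3 _ _ (hbr2 _ _ hl))
    (by
      by_contra hcon
      push Not at hcon
      apply hc2
      rw [LieModule.lowerCentralSeries_succ, LieSubmodule.lie_eq_bot_iff]
      intro s _ l hl
      exact hcon s l hl)
    (by
      intro t ht
      apply hstem
      rw [LieModule.mem_maxTrivSubmodule]
      intro s
      rw [← lie_skew, ht, neg_zero])
  let π : E →ₗ⁅F⁆ T :=
    { toLinearMap := e.symm.toLinearEquiv.toLinearMap.comp
        (LieSubmodule.Quotient.mk' (LieAlgebra.center F E) : E →ₗ[F] _)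
      map_lie' := by
        intro u v
        exact e.symm.map_lie (LieSubmodule.Quotient.mk u) (LieSubmodule.Quotient.mk v) }
  have hπ : ∀ u, π u = e.symm (LieSubmodule.Quotient.mk' (LieAlgebra.center F E) u) :=
    fun u => rfl
  refine hz (lift_argument (F := F) (E := E) π ?_ ?_ x w y z a b h1 h2 h3 h4 h5 h6 h7 h8)
  · intro t
    obtain ⟨u, hu⟩ := LieSubmodule.Quotient.surjective_mk' (LieAlgebra.center F E) (e t)
    exact ⟨u, by rw [hπ, hu, LieEquiv.symm_apply_apply]⟩
  · intro u
    have h0 : π u = 0 ↔ LieSubmodule.Quotient.mk' (LieAlgebra.center F E) u = 0 := by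
      rw [hπ]
      constructor
      · intro h
        rw [← e.apply_symm_apply (LieSubmodule.Quotient.mk' (LieAlgebra.center F E) u), h]
        exact e.toLieHom.map_zero
      · intro h
        rw [h]
        exact e.symm.toLieHom.map_zero
    rw [h0, LieSubmodule.Quotient.mk_eq_zero, LieModule.mem_maxTrivSubmodule]
    constructor
    · intro h v
      rw [← lie_skew, h, neg_zero]
    · intro h v
      rw [← lie_skew, h, neg_zero]
end

section
/- The Lie algebra L_{4,3} over any field F, with basis x₁,…,x₄ and nonzero brackets [x₁,x₂] = x₃, [x₁,x₃] = x₄, is capable. -/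
open Module

universe u

/-- `L` is isomorphic to `L_{4,3}`: basis `x₁,…,x₄` with `[x₁,x₂]=x₃`, `[x₁,x₃]=x₄` and all other brackets of basis vectors zero. -/
def IsL43 (F : Type u) (L : Type u) [Field F] [LieRing L] [LieAlgebra F L] : Prop :=
  ∃ b : Basis (Fin 4) F L,
    ⁅b 0, b 1⁆ = b 2 ∧
    ⁅b 0, b 2⁆ = b 3 ∧
    ∀ i j : Fin 4, i < j → (i, j) ≠ (0, 1) → (i, j) ≠ (0, 2) → ⁅b i, b j⁆ = 0

/-- Underlying space of the five-dimensional filiform Lie algebra. -/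
def Fil5 (F : Type u) : Type u := Fin 5 → F

namespace Fil5

variable {F : Type u} [Field F]

/-- A basis vector. -/
def eb : Fil5 F := ![0, 1, 0, 0, 0]

/-- A basis vector. -/
def ea : Fil5 F := ![1, 0, 0, 0, 0]

instance : AddCommGroup (Fil5 F) := inferInstanceAs (AddCommGroup (Fin 5 → F))
instance : Module F (Fil5 F) := inferInstanceAs (Module F (Fin 5 → F))

/-- Bracket: `[e₀,eᵢ] = eᵢ₊₁` for `i = 1,2,3`. -/
def br (x y : Fil5 F) : Fil5 F :=
  ![0, 0, x 0 * y 1 - x 1 * y 0, x 0 * y 2 - x 2 * y 0, x 0 * y 3 - x 3 * y 0]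

theorem ext5 {x y : Fil5 F} (h0 : x 0 = y 0) (h1 : x 1 = y 1) (h2 : x 2 = y 2)
    (h3 : x 3 = y 3) (h4 : x 4 = y 4) : x = y := by
  funext i
  fin_cases i
  exacts [h0, h1, h2, h3, h4]

theorem add_ap (x y : Fil5 F) (i : Fin 5) : (x + y) i = x i + y i := rfl
theorem smul_ap (c : F) (x : Fil5 F) (i : Fin 5) : (c • x) i = c * x i := rfl
theorem zero_ap (i : Fin 5) : (0 : Fil5 F) i = 0 := rfl
theorem br0 (x y : Fil5 F) : br x y 0 = 0 := rfl
theorem br1 (x y : Fil5 F) : br x y 1 = 0 := rfl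
theorem br2 (x y : Fil5 F) : br x y 2 = x 0 * y 1 - x 1 * y 0 := rfl
theorem br3 (x y : Fil5 F) : br x y 3 = x 0 * y 2 - x 2 * y 0 := rfl
theorem br4 (x y : Fil5 F) : br x y 4 = x 0 * y 3 - x 3 * y 0 := rfl

instance : LieRing (Fil5 F) where
  bracket := br
  add_lie x y z := by
    change br _ _ = br _ _ + br _ _
    apply ext5 <;> simp only [add_ap, br0, br1, br2, br3, br4] <;> ring
  lie_add x y z := by
    change br _ _ = br _ _ + br _ _
    apply ext5 <;> simp only [add_ap, br0, br1, br2, br3, br4] <;> ring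
  lie_self x := by
    change br _ _ = 0
    apply ext5 <;> simp only [zero_ap, br0, br1, br2, br3, br4] <;> ring
  leibniz_lie x y z := by
    change br _ (br _ _) = br (br _ _) _ + br _ (br _ _)
    apply ext5 <;> simp only [add_ap, br0, br1, br2, br3, br4] <;> ring

theorem lie_def (x y : Fil5 F) : ⁅x, y⁆ = br x y := rfl

instance : LieAlgebra F (Fil5 F) where
  lie_smul c x y := by
    simp only [lie_def]
    apply ext5 <;> simp only [smul_ap, br0, br1, br2, br3, br4] <;> ring

theorem mem_center (x : Fil5 F) :
    x ∈ LieAlgebra.center F (Fil5 F) ↔ x 0 = 0 ∧ x 1 = 0 ∧ x 2 = 0 ∧ x 3 = 0 := by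
  rw [LieModule.mem_maxTrivSubmodule]
  constructor
  · intro h
    have h0 := h ea
    have h1 := h eb
    rw [lie_def] at h0 h1
    have a := congrFun h1 2
    have b := congrFun h0 2
    have c := congrFun h0 3
    have d := congrFun h0 4
    rw [br2, zero_ap] at a b
    rw [br3, zero_ap] at c
    rw [br4, zero_ap] at d
    simp [ea, eb] at a b c d
    exact ⟨a, b, c, d⟩
  · rintro ⟨a, b, c, d⟩ y
    rw [lie_def]
    apply ext5 <;> simp only [zero_ap, br0, br1, br2, br3, br4, a, b, c, d] <;> ring

end Fil5

theorem capable_of_surj (F L E : Type u) [Field F] [LieRing L] [LieAlgebra F L]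
    [LieRing E] [LieAlgebra F E] (f : E →ₗ⁅F⁆ L) (hs : Function.Surjective f)
    (hk : f.ker = LieAlgebra.center F E) : IsCapable F L := by
  have e : (E ⧸ f.ker) ≃ₗ⁅F⁆ L :=
    f.quotKerEquivRange.trans
      ((LieEquiv.ofEq _ _ (by rw [(LieHom.range_eq_top f).2 hs])).trans
        LieSubalgebra.topEquiv)
  rw [hk] at e
  exact ⟨⟨E, e.symm⟩⟩

/-- The Lie algebra `L_{4,3}` over any field is capable. -/
theorem L43_isCapable
    (F L : Type u) [Field F] [LieRing L] [LieAlgebra F L]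
    (h : IsL43 F L) :
    IsCapable F L := by
  obtain ⟨b, h01, h02, hz⟩ := h
  have h03 : ⁅b 0, b 3⁆ = 0 := hz 0 3 (by decide) (by decide) (by decide)
  have h12 : ⁅b 1, b 2⁆ = 0 := hz 1 2 (by decide) (by decide) (by decide)
  have h13 : ⁅b 1, b 3⁆ = 0 := hz 1 3 (by decide) (by decide) (by decide)
  have h23 : ⁅b 2, b 3⁆ = 0 := hz 2 3 (by decide) (by decide) (by decide)
  have h10 : ⁅b 1, b 0⁆ = - b 2 := by rw [← lie_skew, h01]
  have h20 : ⁅b 2, b 0⁆ = - b 3 := by rw [← lie_skew, h02]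
  have h30 : ⁅b 3, b 0⁆ = 0 := by rw [← lie_skew, h03, neg_zero]
  have h21 : ⁅b 2, b 1⁆ = 0 := by rw [← lie_skew, h12, neg_zero]
  have h31 : ⁅b 3, b 1⁆ = 0 := by rw [← lie_skew, h13, neg_zero]
  have h32 : ⁅b 3, b 2⁆ = 0 := by rw [← lie_skew, h23, neg_zero]
  let f : Fil5 F →ₗ⁅F⁆ L :=
    { toFun := fun x => x 0 • b 0 + x 1 • b 1 + x 2 • b 2 + x 3 • b 3
      map_add' := fun x y => by simp only [Fil5.add_ap]; module
      map_smul' := fun c x => by simp only [Fil5.smul_ap, RingHom.id_apply]; module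
      map_lie' := fun {x y} => by
        simp only [Fil5.lie_def, Fil5.br0, Fil5.br1, Fil5.br2, Fil5.br3, add_lie, lie_add,
          smul_lie, lie_smul, h01, h02, h03, h12, h13, h23, h10, h20, h30, h21, h31, h32,
          lie_self]
        module }
  have hf : ∀ x, f x = x 0 • b 0 + x 1 • b 1 + x 2 • b 2 + x 3 • b 3 := fun _ => rfl
  refine capable_of_surj F L (Fil5 F) f ?_ ?_
  · intro y
    refine ⟨(![b.repr y 0, b.repr y 1, b.repr y 2, b.repr y 3, 0] : Fin 5 → F), ?_⟩
    refine (hf _).trans ?_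
    conv_rhs => rw [← b.sum_repr y, Fin.sum_univ_four]
    rfl
  · ext x
    rw [LieHom.mem_ker, Fil5.mem_center, hf]
    constructor
    · intro h
      have := Fintype.linearIndependent_iff.1 b.linearIndependent ![x 0, x 1, x 2, x 3]
        (by rw [Fin.sum_univ_four]; exact h)
      exact ⟨this 0, this 1, this 2, this 3⟩
    · rintro ⟨h0, h1, h2, h3⟩
      simp [h0, h1, h2, h3]
end

section
/- The Lie algebra L_{5,5} over any field F, with basis x₁,…,x₅ and nonzero brackets [x₁,x₂] = x₃, [x₁,x₃] = x₅, [x₂,x₄] = x₅, is capable. -/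
open Module

universe u

/-- The covering algebra: six-dimensional, with brackets
`[1,2]=3, [1,3]=5, [2,4]=5, [1,5]=6, [3,4]=6`. -/
@[ext] structure E55 (F : Type u) where
  a : F
  b : F
  c : F
  d : F
  e : F
  f : F

namespace E55

variable {F : Type u} [Field F]

instance : Zero (E55 F) := ⟨⟨0, 0, 0, 0, 0, 0⟩⟩
instance : Add (E55 F) :=
  ⟨fun x y => ⟨x.a + y.a, x.b + y.b, x.c + y.c, x.d + y.d, x.e + y.e, x.f + y.f⟩⟩
instance : Neg (E55 F) := ⟨fun x => ⟨-x.a, -x.b, -x.c, -x.d, -x.e, -x.f⟩⟩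
instance : SMul F (E55 F) :=
  ⟨fun t x => ⟨t * x.a, t * x.b, t * x.c, t * x.d, t * x.e, t * x.f⟩⟩
instance : Bracket (E55 F) (E55 F) :=
  ⟨fun x y => ⟨0, 0, x.a * y.b - x.b * y.a, 0,
    x.a * y.c - x.c * y.a + (x.b * y.d - x.d * y.b),
    x.a * y.e - x.e * y.a + (x.c * y.d - x.d * y.c)⟩⟩

theorem zero_def : (0 : E55 F) = ⟨0, 0, 0, 0, 0, 0⟩ := rfl
theorem add_def (x y : E55 F) :
    x + y = ⟨x.a + y.a, x.b + y.b, x.c + y.c, x.d + y.d, x.e + y.e, x.f + y.f⟩ := rfl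
theorem neg_def (x : E55 F) : -x = ⟨-x.a, -x.b, -x.c, -x.d, -x.e, -x.f⟩ := rfl
theorem smul_def (t : F) (x : E55 F) :
    t • x = ⟨t * x.a, t * x.b, t * x.c, t * x.d, t * x.e, t * x.f⟩ := rfl
theorem lie_def (x y : E55 F) : ⁅x, y⁆ = ⟨0, 0, x.a * y.b - x.b * y.a, 0,
    x.a * y.c - x.c * y.a + (x.b * y.d - x.d * y.b),
    x.a * y.e - x.e * y.a + (x.c * y.d - x.d * y.c)⟩ := rfl

instance : AddCommGroup (E55 F) where
  add_assoc x y z := by ext <;> simp only [add_def] <;> ring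
  zero_add x := by ext <;> simp only [add_def, zero_def] <;> ring
  add_zero x := by ext <;> simp only [add_def, zero_def] <;> ring
  add_comm x y := by ext <;> simp only [add_def] <;> ring
  neg_add_cancel x := by ext <;> simp only [add_def, neg_def, zero_def] <;> ring
  nsmul := nsmulRec
  zsmul := zsmulRec

instance : LieRing (E55 F) where
  add_lie x y z := by ext <;> simp only [add_def, lie_def] <;> ring
  lie_add x y z := by ext <;> simp only [add_def, lie_def] <;> ring
  lie_self x := by ext <;> simp only [zero_def, lie_def] <;> ring
  leibniz_lie x y z := by ext <;> simp only [add_def, lie_def] <;> ring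

instance : Module F (E55 F) where
  one_smul x := by ext <;> simp only [smul_def] <;> ring
  mul_smul s t x := by ext <;> simp only [smul_def] <;> ring
  smul_zero t := by ext <;> simp only [smul_def, zero_def] <;> ring
  smul_add t x y := by ext <;> simp only [smul_def, add_def] <;> ring
  add_smul s t x := by ext <;> simp only [smul_def, add_def] <;> ring
  zero_smul x := by ext <;> simp only [smul_def, zero_def] <;> ring

instance : LieAlgebra F (E55 F) where
  lie_smul t x y := by ext <;> simp only [smul_def, lie_def] <;> ring

theorem mem_center_iff (x : E55 F) : x ∈ LieAlgebra.center F (E55 F) ↔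
    x.a = 0 ∧ x.b = 0 ∧ x.c = 0 ∧ x.d = 0 ∧ x.e = 0 := by
  rw [LieModule.mem_maxTrivSubmodule]
  constructor
  · intro h
    have h1 := h ⟨1, 0, 0, 0, 0, 0⟩
    have h2 := h ⟨0, 1, 0, 0, 0, 0⟩
    simp only [lie_def, zero_def, E55.mk.injEq] at h1 h2
    simp at h1 h2
    tauto
  · rintro ⟨h1, h2, h3, h4, h5⟩ y
    simp [lie_def, zero_def, h1, h2, h3, h4, h5]

end E55

/-- The Lie algebra `L_{5,5}` over any field is capable. -/
theorem L55_isCapable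
    (F L : Type u) [Field F] [LieRing L] [LieAlgebra F L]
    (h : IsL55 F L) :
    IsCapable F L := by
  obtain ⟨b, h01, h02, h13, hz⟩ := h
  have h03 := hz 0 3 (by decide) (by decide) (by decide) (by decide)
  have h04 := hz 0 4 (by decide) (by decide) (by decide) (by decide)
  have h12 := hz 1 2 (by decide) (by decide) (by decide) (by decide)
  have h14 := hz 1 4 (by decide) (by decide) (by decide) (by decide)
  have h23 := hz 2 3 (by decide) (by decide) (by decide) (by decide)
  have h24 := hz 2 4 (by decide) (by decide) (by decide) (by decide)
  have h34 := hz 3 4 (by decide) (by decide) (by decide) (by decide)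
  have sk : ∀ {i j : Fin 5} {z : L}, ⁅b i, b j⁆ = z → ⁅b j, b i⁆ = -z := by
    intro i j z hh
    rw [← hh, lie_skew]
  let φ : E55 F →ₗ⁅F⁆ L :=
    { toFun := fun x => x.a • b 0 + x.b • b 1 + x.c • b 2 + x.d • b 3 + x.e • b 4
      map_add' := by
        intro x y
        simp only [E55.add_def]
        module
      map_smul' := by
        intro t x
        simp only [E55.smul_def, RingHom.id_apply]
        module
      map_lie' := by
        intro x y
        simp only [E55.lie_def, lie_add, add_lie, lie_smul, smul_lie, lie_self, h01, h02, h03, h04,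
          h12, h13, h14, h23, h24, h34, sk h01, sk h02, sk h03, sk h04,
          sk h12, sk h13, sk h14, sk h23, sk h24, sk h34]
        module }
  have hφ : ∀ x : E55 F, φ x = x.a • b 0 + x.b • b 1 + x.c • b 2 + x.d • b 3 + x.e • b 4 :=
    fun _ => rfl
  have hsurj : Function.Surjective φ := by
    intro y
    refine ⟨⟨b.repr y 0, b.repr y 1, b.repr y 2, b.repr y 3, b.repr y 4, 0⟩, ?_⟩
    rw [hφ]
    have hy := b.sum_repr y
    rw [Fin.sum_univ_five] at hy
    exact hy
  have hker : φ.ker = LieAlgebra.center F (E55 F) := by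
    ext x
    rw [LieHom.mem_ker, E55.mem_center_iff, hφ]
    constructor
    · intro hx
      have hl := Fintype.linearIndependent_iff.1 b.linearIndependent ![x.a, x.b, x.c, x.d, x.e]
        (by simpa [Fin.sum_univ_five] using hx)
      exact ⟨hl 0, hl 1, hl 2, hl 3, hl 4⟩
    · rintro ⟨h1, h2, h3, h4, h5⟩
      simp [h1, h2, h3, h4, h5]
  have key : Nonempty ((E55 F ⧸ φ.ker) ≃ₗ⁅F⁆ L) :=
    ⟨φ.quotKerEquivRange.trans ((LieEquiv.ofEq _ _ (by
      rw [(LieHom.range_eq_top φ).2 hsurj])).trans LieSubalgebra.topEquiv)⟩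
  rw [hker] at key
  obtain ⟨g⟩ := key
  exact ⟨{ carrier := E55 F, equiv := g.symm }⟩
end
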